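/- arXiv:1202.5463 — 2 statements merged into one kernel-verified Lean document; each statement's English description precedes it below -/
import Mathlib

section
/- Let ψ satisfy Assumptions 1 and 2 and fix h > 0. Then the map θ ↦ b^θ(h) is continuously differentiable on (θ_∞, +∞), and for every θ > θ_∞: −∂_θ b^θ(h) = ψ_θ(b^θ(h)) ∫_{b^θ(h)}^∞ γ_θ(r)/ψ_θ(r)² dr = ψ_θ(b^θ(h)) ∫_0^h γ_θ(b^θ(a))/ψ_θ(b^θ(a)) da = ∫_0^h γ_θ(b^θ(h−a)) · exp( −ψ'(θ) a − ∫_0^a γ_θ(b^θ(h−x)) dx ) da. -/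
/-!
Above `θ_∞` the branching mechanism `ψ` is continuously differentiable with non-decreasing
derivative: near any `θ > θ_∞` the jump integrand and its derivative are dominated by a multiple of
`1 ∧ x²` plus a multiple of `e^{-sx} 1_{x>1}` for some `s ∈ Θ'` with `s < θ`
(`exists_nhds_jumpBound`, `hasDerivAt_psi`, `continuousAt_psiDeriv`, `psiDeriv_mono`). The rest of
the argument uses nothing else about `ψ` (`IsConvexC1`, `IsInverseFlow`).

Substituting `u = r + θ` in `∫_{b}^∞ dr / ψ_θ(r) = h` gives `∫_B^∞ du / (ψ(u) - c) = h` with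
`B = b + θ` and `c = ψ(θ)`. The left side is a continuously differentiable function of `(c, B)`,
with partial derivatives `∫_B^∞ (ψ - c)⁻²` and `-(ψ(B) - c)⁻¹`. This needs integrability to persist
for slightly larger `c` and smaller `B`: since `b^θ` is decreasing, there is room below `b^θ(h)`,
and at the smaller endpoint `b^θ(h + 1)` the level can be raised to the midpoint of `ψ(θ)` and
`ψ(b^θ(h + 1) + θ)` at the cost of a factor `2` (`IsInverseFlow.exists_tail`). The implicit function
theorem (`tail_implicit`) then gives
`∂_θ b^θ(h) = ψ_θ(b) ψ'(θ) ∫_b^∞ ψ_θ⁻² - 1`, which is continuous in `θ`.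

Because `γ_θ = ψ_θ' - ψ'(θ)` and `ψ_θ' / ψ_θ²` is the derivative of `-1 / ψ_θ`, which vanishes at
infinity, the right side is `-ψ_θ(b) ∫_b^∞ γ_θ / ψ_θ²` (`IsConvexC1.integral_gamma`). The change of
variables `r = b^θ(a)`, `dr = -ψ_θ(r) da`, gives the second form
(`IsInverseFlow.integral_gamma_eq`). For the third, the same flow equation shows
`ψ'(θ) a + ∫_0^a γ_θ(b^θ(h-x)) dx = log ψ_θ(b^θ(h-a)) - log ψ_θ(b^θ(h))`
(`IsInverseFlow.integral_gamma_log`), so the exponential is the quotient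
`ψ_θ(b^θ(h)) / ψ_θ(b^θ(h-a))`.
-/

open Set Filter

/-- The branching mechanism
`ψ(λ) = αλ + βλ² + ∫_{(0,∞)} (e^{-λx} - 1 + λx 1_{x<1}) Π(dx)`. -/
noncomputable def psi (α β : ℝ) (ν : MeasureTheory.Measure ℝ) (l : ℝ) : ℝ :=
  α * l + β * l ^ 2 +
    ∫ x, (Real.exp (-(l * x)) - 1 + (if x < 1 then l * x else 0)) ∂ν

/-- `ν` is a Lévy measure on `(0,∞)`: it puts no mass on `(-∞,0]` and integrates
`1 ∧ x²`. -/
def IsLevyMeasure (ν : MeasureTheory.Measure ℝ) : Prop :=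
  ν (Set.Iic 0) = 0 ∧ ∫⁻ x, ENNReal.ofReal (min 1 (x ^ 2)) ∂ν ≠ ⊤

/-- The set `Θ' = {θ ∈ ℝ : ∫_{(1,∞)} e^{-θx} Π(dx) < ∞}`. -/
def ThetaPrime (ν : MeasureTheory.Measure ℝ) : Set ℝ :=
  {θ : ℝ | ∫⁻ x in Set.Ioi 1, ENNReal.ofReal (Real.exp (-(θ * x))) ∂ν ≠ ⊤}

/-- `θ_∞ = inf Θ'` (as an extended real, possibly `-∞`). -/
noncomputable def thetaInf (ν : MeasureTheory.Measure ℝ) : EReal :=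
  ⨅ θ ∈ ThetaPrime ν, (θ : EReal)

/-- The shifted branching mechanism `ψ_θ(λ) = ψ(λ+θ) - ψ(θ)`. -/
noncomputable def psiShift (α β : ℝ) (ν : MeasureTheory.Measure ℝ) (θ l : ℝ) : ℝ :=
  psi α β ν (l + θ) - psi α β ν θ

/-- `γ_θ(λ) = ψ'(λ+θ) - ψ'(θ)`. -/
noncomputable def gammaTheta (α β : ℝ) (ν : MeasureTheory.Measure ℝ) (θ l : ℝ) : ℝ :=
  deriv (psi α β ν) (l + θ) - deriv (psi α β ν) θ

/-- `q_θ = sup({0} ∪ {r > 0 : ψ_θ(r) ≤ 0})`, the largest root region of `ψ_θ`. -/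
noncomputable def qTheta (α β : ℝ) (ν : MeasureTheory.Measure ℝ) (θ : ℝ) : ℝ :=
  sSup ({0} ∪ {r : ℝ | 0 < r ∧ psiShift α β ν θ r ≤ 0})

/-- Assumption 1: `ψ` is conservative (`∫_{0+} du/|ψ(u)| = ∞`) and `β > 0` or
`∫_{(0,1)} x Π(dx) = ∞`. -/
def Assumption1 (α β : ℝ) (ν : MeasureTheory.Measure ℝ) : Prop :=
  (∀ ε > (0:ℝ), ∫⁻ u in Set.Ioc (0:ℝ) ε, ENNReal.ofReal (1 / |psi α β ν u|) = ⊤) ∧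
  (0 < β ∨ ∫⁻ x in Set.Ioo (0:ℝ) 1, ENNReal.ofReal x ∂ν = ⊤)

/-- Assumption 2 (Grey condition): `ψ(u) > 0` for large `u` and `∫^∞ du/ψ(u) < ∞`. -/
def Assumption2 (α β : ℝ) (ν : MeasureTheory.Measure ℝ) : Prop :=
  ∃ M : ℝ, (∀ u, M ≤ u → 0 < psi α β ν u) ∧
    ∫⁻ u in Set.Ioi M, ENNReal.ofReal (1 / psi α β ν u) ≠ ⊤

/-- `ψ` is critical: its right derivative at `0` vanishes (`ψ(0) = 0`, so
`ψ'(0+) = lim_{λ↓0} ψ(λ)/λ`). -/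
def IsCritical (α β : ℝ) (ν : MeasureTheory.Measure ℝ) : Prop :=
  Filter.Tendsto (fun l => psi α β ν l / l) (nhdsWithin 0 (Set.Ioi 0)) (nhds 0)

/-! ### Regularity of the branching mechanism -/

/-- The integrand `e^{-lx} - 1 + lx 1_{x<1}` of the jump part of `psi`. -/
noncomputable def jumpKernel (l x : ℝ) : ℝ :=
  Real.exp (-(l * x)) - 1 + (if x < 1 then l * x else 0)

/-- The derivative of `jumpKernel l x` with respect to `l`. -/
noncomputable def jumpKernelDeriv (l x : ℝ) : ℝ :=
  -(x * Real.exp (-(l * x))) + (if x < 1 then x else 0)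

/-- The formula for `ψ'(l)` obtained by differentiating `psi` under the integral sign;
the derivative of `psi` only above `thetaInf ν`, see `hasDerivAt_psi`. -/
noncomputable def psiDeriv (α β : ℝ) (ν : MeasureTheory.Measure ℝ) (l : ℝ) : ℝ :=
  α + 2 * β * l + ∫ x, jumpKernelDeriv l x ∂ν

/-- A function of the jump size `x` dominating `jumpKernel l x` and `jumpKernelDeriv l x` for
every `l ∈ [-R, R]` with `l ≥ s + δ`: a multiple of `1 ∧ x²`, plus a multiple of `e^{-sx}` on the
large jumps, where the margin `δ` absorbs, through `δx ≤ e^{δx}`, the factor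
`x` produced by differentiation. -/
noncomputable def jumpBound (s δ R x : ℝ) : ℝ :=
  (R ^ 2 * Real.exp R + R * Real.exp R + Real.exp R + 1) * min 1 (x ^ 2) +
    (1 / δ + 1) * (Ioi (1 : ℝ)).indicator (fun x => Real.exp (-(s * x))) x

theorem abs_exp_sub_one_le_mul_exp (t : ℝ) : |Real.exp t - 1| ≤ |t| * Real.exp |t| := by
  have h1 : t + 1 ≤ Real.exp t := Real.add_one_le_exp t
  have h2 : 1 - t ≤ Real.exp (-t) := by linarith [Real.add_one_le_exp (-t)]
  have h3 : Real.exp t * Real.exp (-t) = 1 := by rw [← Real.exp_add]; simp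
  have h4 : Real.exp t - 1 ≤ t * Real.exp t := by nlinarith [Real.exp_pos t]
  rcases le_total 0 t with h | h
  · rw [abs_of_nonneg h, abs_of_nonneg (by linarith)]
    exact h4
  · rw [abs_of_nonpos h, abs_of_nonpos (by linarith [Real.exp_le_one_iff.2 h])]
    nlinarith [Real.one_le_exp (neg_nonneg.2 h)]

theorem abs_exp_sub_one_sub_le_sq_mul_exp (t : ℝ) :
    |Real.exp t - 1 - t| ≤ t ^ 2 * Real.exp |t| := by
  have h1 : t + 1 ≤ Real.exp t := Real.add_one_le_exp t
  have h2 : 1 - t ≤ Real.exp (-t) := by linarith [Real.add_one_le_exp (-t)]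
  have h3 : Real.exp t * Real.exp (-t) = 1 := by rw [← Real.exp_add]; simp
  have h4 : Real.exp t - 1 ≤ t * Real.exp t := by nlinarith [Real.exp_pos t]
  rw [abs_of_nonneg (by linarith)]
  calc Real.exp t - 1 - t ≤ t * (Real.exp t - 1) := by linarith
    _ ≤ |t| * |Real.exp t - 1| := by rw [← abs_mul]; exact le_abs_self _
    _ ≤ |t| * (|t| * Real.exp |t|) :=
        mul_le_mul_of_nonneg_left (abs_exp_sub_one_le_mul_exp t) (abs_nonneg t)
    _ = t ^ 2 * Real.exp |t| := by rw [← mul_assoc, ← sq, sq_abs]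

/-- Small jumps `x < 1` use first and second order bounds for `exp`; for `x > 1` the decay of
`e^{-δx}` absorbs the factor `x` of the derivative. -/
theorem abs_jumpKernel_le {s δ R l x : ℝ} (hδ : 0 < δ) (hR : |l| ≤ R) (hl : s + δ ≤ l)
    (hx : 0 < x) :
    |jumpKernel l x| ≤ jumpBound s δ R x ∧ |jumpKernelDeriv l x| ≤ jumpBound s δ R x := by
  have hR0 : 0 ≤ R := (abs_nonneg l).trans hR
  have hE := Real.exp_pos R
  have hE1 : 1 ≤ Real.exp R := Real.one_le_exp hR0
  have hl2 : l ^ 2 ≤ R ^ 2 := sq_le_sq' (neg_le_of_abs_le hR) (le_of_abs_le hR)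
  have hRE : 0 ≤ R * Real.exp R := by positivity
  have hR2E : 0 ≤ R ^ 2 * Real.exp R := by positivity
  unfold jumpKernel jumpKernelDeriv jumpBound
  rcases lt_trichotomy x 1 with h | rfl | h
  · have hm : min 1 (x ^ 2) = x ^ 2 := min_eq_right (by nlinarith)
    rw [if_pos h, if_pos h, hm, indicator_of_notMem (by simp [h.le]), mul_zero, add_zero]
    have habs : |-(l * x)| = |l| * x := by rw [abs_neg, abs_mul, abs_of_pos hx]
    have hle : |l| * x ≤ R := by nlinarith [abs_nonneg l]
    have hexp : Real.exp (|l| * x) ≤ Real.exp R := Real.exp_le_exp.2 hle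
    constructor
    · have h1 := abs_exp_sub_one_sub_le_sq_mul_exp (-(l * x))
      rw [habs] at h1
      rw [show Real.exp (-(l * x)) - 1 + l * x = Real.exp (-(l * x)) - 1 - -(l * x) by ring]
      calc _ ≤ _ := h1
        _ ≤ (R ^ 2 * x ^ 2) * Real.exp R := by
            refine mul_le_mul ?_ hexp (Real.exp_pos _).le (by positivity)
            rw [neg_sq, mul_pow]
            exact mul_le_mul_of_nonneg_right hl2 (sq_nonneg x)
        _ ≤ _ := by nlinarith [sq_nonneg x]
    · have h1 := abs_exp_sub_one_le_mul_exp (-(l * x))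
      rw [habs] at h1
      rw [show -(x * Real.exp (-(l * x))) + x = -(x * (Real.exp (-(l * x)) - 1)) by ring,
        abs_neg, abs_mul, abs_of_pos hx]
      calc _ ≤ x * (|l| * x * Real.exp (|l| * x)) := mul_le_mul_of_nonneg_left h1 hx.le
        _ ≤ x * (R * x * Real.exp R) := by gcongr
        _ ≤ _ := by nlinarith [sq_nonneg x]
  · rw [if_neg (lt_irrefl 1), if_neg (lt_irrefl 1), indicator_of_notMem (by simp)]
    have hexp : Real.exp (-(l * 1)) ≤ Real.exp R :=
      Real.exp_le_exp.2 (by linarith [neg_le_of_abs_le hR])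
    have h0 := Real.exp_pos (-(l * 1))
    have hm : min (1 : ℝ) (1 ^ 2) = 1 := by norm_num
    rw [hm]
    constructor <;> rw [abs_le] <;> constructor <;> linarith
  · have hm : min 1 (x ^ 2) = 1 := min_eq_left (by nlinarith)
    rw [if_neg h.le.not_gt, if_neg h.le.not_gt, hm, indicator_of_mem (by exact h)]
    have h0 := Real.exp_pos (-(l * x))
    have hs0 := Real.exp_pos (-(s * x))
    have hi : 0 < 1 / δ := by positivity
    have hexp : Real.exp (-(l * x)) ≤ Real.exp (-(s * x)) :=
      Real.exp_le_exp.2 (by nlinarith)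
    have hxexp : x * Real.exp (-(l * x)) ≤ 1 / δ * Real.exp (-(s * x)) := by
      have h1 : δ * x ≤ Real.exp (δ * x) := by linarith [Real.add_one_le_exp (δ * x)]
      have h2 : Real.exp (δ * x) * Real.exp (-(l * x)) ≤ Real.exp (-(s * x)) := by
        rw [← Real.exp_add]
        exact Real.exp_le_exp.2 (by nlinarith)
      rw [div_mul_eq_mul_div, le_div_iff₀ hδ]
      nlinarith
    have hp : 0 ≤ 1 / δ * Real.exp (-(s * x)) := by positivity
    have hq : 0 < x * Real.exp (-(l * x)) := by positivity
    constructor <;> rw [abs_le] <;> constructor <;> nlinarith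

open MeasureTheory in
theorem integrable_jumpBound {ν : Measure ℝ} (hν : IsLevyMeasure ν) {s : ℝ}
    (hs : s ∈ ThetaPrime ν) (δ R : ℝ) : Integrable (jumpBound s δ R) ν := by
  refine Integrable.add (Integrable.const_mul ?_ _) (Integrable.const_mul ?_ _)
  · refine (lintegral_ofReal_ne_top_iff_integrable ?_ ?_).1 hν.2
    · exact (by fun_prop : Measurable fun x : ℝ => min 1 (x ^ 2)).aestronglyMeasurable
    · exact Eventually.of_forall fun x => le_min zero_le_one (sq_nonneg x)
  · refine (integrable_indicator_iff measurableSet_Ioi).2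
      ((lintegral_ofReal_ne_top_iff_integrable ?_ ?_).1 hs)
    · exact (by fun_prop : Measurable fun x : ℝ => Real.exp (-(s * x))).aestronglyMeasurable
    · exact Eventually.of_forall fun x => (Real.exp_pos _).le

theorem measurable_jumpKernel (l : ℝ) : Measurable (jumpKernel l) := by
  unfold jumpKernel
  exact (by fun_prop : Measurable fun x : ℝ => Real.exp (-(l * x)) - 1).add
    (Measurable.ite measurableSet_Iio (by fun_prop) measurable_const)

theorem measurable_jumpKernelDeriv (l : ℝ) : Measurable (jumpKernelDeriv l) := by
  unfold jumpKernelDeriv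
  exact (by fun_prop : Measurable fun x : ℝ => -(x * Real.exp (-(l * x)))).add
    (Measurable.ite measurableSet_Iio measurable_id measurable_const)

theorem ae_pos_of_isLevyMeasure {ν : MeasureTheory.Measure ℝ} (hν : IsLevyMeasure ν) :
    ∀ᵐ x ∂ν, 0 < x := by
  refine MeasureTheory.measure_mono_null (fun x hx => ?_) hν.1
  simpa using hx

/-- Near any `t > θ_∞` a single `ν`-integrable function dominates the jump integrands and their
derivatives. There is `s ∈ Θ'` with `s < t`, and half of the gap `t - s` serves as margin. -/
theorem exists_nhds_jumpBound {ν : MeasureTheory.Measure ℝ} (hν : IsLevyMeasure ν) {t : ℝ}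
    (ht : thetaInf ν < (t : EReal)) :
    ∃ g : ℝ → ℝ, MeasureTheory.Integrable g ν ∧ ∃ V ∈ nhds t, ∀ᵐ x ∂ν, ∀ l ∈ V,
      |jumpKernel l x| ≤ g x ∧ |jumpKernelDeriv l x| ≤ g x := by
  unfold thetaInf at ht
  simp only [iInf_lt_iff] at ht
  obtain ⟨s, hs, hst⟩ := ht
  have hst' : s < t := EReal.coe_lt_coe_iff.1 hst
  refine ⟨jumpBound s ((t - s) / 2) (|t| + 1), integrable_jumpBound hν hs _ _,
    Ioo (t - 1) (t + 1) ∩ Ioi ((t + s) / 2),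
    inter_mem (Ioo_mem_nhds (by linarith) (by linarith)) (Ioi_mem_nhds (by linarith)), ?_⟩
  filter_upwards [ae_pos_of_isLevyMeasure hν] with x hx l hl
  obtain ⟨⟨h1, h2⟩, h3⟩ := hl
  have h3' : (t + s) / 2 < l := h3
  refine abs_jumpKernel_le (by linarith) ?_ (by linarith) hx
  have := abs_sub_abs_le_abs_sub l t
  have : |l - t| ≤ 1 := abs_le.2 ⟨by linarith, by linarith⟩
  linarith

theorem integrable_jumpKernelDeriv {ν : MeasureTheory.Measure ℝ} (hν : IsLevyMeasure ν) {t : ℝ}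
    (ht : thetaInf ν < (t : EReal)) : MeasureTheory.Integrable (jumpKernelDeriv t) ν := by
  obtain ⟨g, hg, V, hV, hb⟩ := exists_nhds_jumpBound hν ht
  refine hg.mono' (measurable_jumpKernelDeriv t).aestronglyMeasurable ?_
  filter_upwards [hb] with x hx using (hx t (mem_of_mem_nhds hV)).2

open MeasureTheory in
theorem hasDerivAt_psi (α β : ℝ) {ν : Measure ℝ} (hν : IsLevyMeasure ν) {t : ℝ}
    (ht : thetaInf ν < (t : EReal)) : HasDerivAt (psi α β ν) (psiDeriv α β ν t) t := by
  obtain ⟨g, hg, V, hV, hb⟩ := exists_nhds_jumpBound hν ht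
  have hJ : HasDerivAt (fun l => ∫ x, jumpKernel l x ∂ν) (∫ x, jumpKernelDeriv t x ∂ν) t := by
    refine (hasDerivAt_integral_of_dominated_loc_of_deriv_le (F := jumpKernel)
      (F' := jumpKernelDeriv) (bound := g) hV
      (Eventually.of_forall fun l => (measurable_jumpKernel l).aestronglyMeasurable) ?_
      (measurable_jumpKernelDeriv t).aestronglyMeasurable ?_ hg ?_).2
    · refine hg.mono' (measurable_jumpKernel t).aestronglyMeasurable ?_
      filter_upwards [hb] with x hx using (hx t (mem_of_mem_nhds hV)).1
    · filter_upwards [hb] with x hx l hl using (hx l hl).2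
    · refine Eventually.of_forall fun x l _ => ?_
      have h1 : HasDerivAt (fun l : ℝ => Real.exp (-(l * x)) - 1)
          (-(x * Real.exp (-(l * x)))) l := by
        convert! (((hasDerivAt_id l).mul_const x).neg.exp).sub_const 1 using 1
        simp [mul_comm]
      unfold jumpKernel jumpKernelDeriv
      split_ifs with h
      · convert! h1.add ((hasDerivAt_id l).mul_const x) using 1
        simp
      · exact h1.add (hasDerivAt_const l 0)
  have hP : HasDerivAt (fun l : ℝ => α * l + β * l ^ 2) (α + 2 * β * t) t := by
    convert! ((hasDerivAt_id t).const_mul α).add (((hasDerivAt_id t).pow 2).const_mul β) using 1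
    simp
    ring
  exact hP.add hJ

open MeasureTheory in
theorem continuousAt_psiDeriv (α β : ℝ) {ν : Measure ℝ} (hν : IsLevyMeasure ν) {t : ℝ}
    (ht : thetaInf ν < (t : EReal)) : ContinuousAt (psiDeriv α β ν) t := by
  obtain ⟨g, hg, V, hV, hb⟩ := exists_nhds_jumpBound hν ht
  unfold psiDeriv
  refine ContinuousAt.add (by fun_prop) (continuousAt_of_dominated (bound := g)
    (Eventually.of_forall fun l => (measurable_jumpKernelDeriv l).aestronglyMeasurable)
    ?_ hg ?_)
  · filter_upwards [hV] with l hl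
    filter_upwards [hb] with x hx using (hx l hl).2
  · refine Eventually.of_forall fun x => ?_
    unfold jumpKernelDeriv
    fun_prop

/-- Convexity of `ψ` above `θ_∞`. -/
theorem psiDeriv_mono (α : ℝ) {β : ℝ} (hβ : 0 ≤ β) {ν : MeasureTheory.Measure ℝ}
    (hν : IsLevyMeasure ν) {s t : ℝ} (hs : thetaInf ν < (s : EReal)) (hst : s ≤ t) :
    psiDeriv α β ν s ≤ psiDeriv α β ν t := by
  have ht : thetaInf ν < (t : EReal) := hs.trans_le (EReal.coe_le_coe_iff.2 hst)
  have hJ : ∫ x, jumpKernelDeriv s x ∂ν ≤ ∫ x, jumpKernelDeriv t x ∂ν := by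
    refine MeasureTheory.integral_mono_ae (integrable_jumpKernelDeriv hν hs)
      (integrable_jumpKernelDeriv hν ht) ?_
    filter_upwards [ae_pos_of_isLevyMeasure hν] with x hx
    unfold jumpKernelDeriv
    have : Real.exp (-(t * x)) ≤ Real.exp (-(s * x)) := Real.exp_le_exp.2 (by nlinarith)
    nlinarith
  unfold psiDeriv
  nlinarith

/-! ### Translation of integrals over half-lines -/

open MeasureTheory in
theorem integral_Ioi_shift (g : ℝ → ℝ) (y θ : ℝ) :
    ∫ r in Ioi y, g (r + θ) = ∫ u in Ioi (y + θ), g u := by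
  have := (measurePreserving_add_right volume θ).setIntegral_preimage_emb
    (MeasurableEquiv.addRight θ).measurableEmbedding g (Ioi (y + θ))
  rw [← this]
  simp

open MeasureTheory in
theorem integrableOn_Ioi_shift (g : ℝ → ℝ) (y θ : ℝ) :
    IntegrableOn (fun r => g (r + θ)) (Ioi y) ↔ IntegrableOn g (Ioi (y + θ)) := by
  have := (measurePreserving_add_right volume θ).integrableOn_comp_preimage
    (MeasurableEquiv.addRight θ).measurableEmbedding (f := g) (s := Ioi (y + θ))
  rw [← this]
  simp [Function.comp_def]

/-! ### Tail integrals of `1 / (f - c)` -/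

open MeasureTheory in
/-- If `1 / (f - c₁)` is integrable at infinity with `f` monotone above the level `c₁`, then so is
`1 / (f - c)` for lower levels `c`, and so is its square because `f - c` is bounded below. -/
theorem tail_integrable {f : ℝ → ℝ} {c₁ B₁ : ℝ} (hcont : ContinuousOn f (Ici B₁))
    (hmono : MonotoneOn f (Ici B₁)) (hpos : c₁ < f B₁)
    (hint : IntegrableOn (fun u => (f u - c₁)⁻¹) (Ioi B₁)) {c B : ℝ} (hc : c ≤ c₁)
    (hB : B₁ ≤ B) :
    IntegrableOn (fun u => (f u - c)⁻¹) (Ioi B) ∧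
      IntegrableOn (fun u => ((f u - c) ^ 2)⁻¹) (Ioi B) := by
  have hsub : Ioi B ⊆ Ici B₁ := fun x hx => hB.trans (le_of_lt hx)
  have hge : ∀ u ∈ Ioi B, f B₁ ≤ f u := fun u hu =>
    hmono self_mem_Ici (hsub hu) (hsub hu)
  have hne : ∀ u ∈ Ioi B, f u - c ≠ 0 := fun u hu => by
    have := hge u hu
    exact ne_of_gt (by linarith)
  have hcf : ContinuousOn (fun u => f u - c) (Ioi B) :=
    (hcont.mono hsub).sub continuousOn_const
  have hint' := hint.mono_set (Ioi_subset_Ioi hB)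
  constructor
  · refine Integrable.mono' hint' ((hcf.inv₀ hne).aestronglyMeasurable measurableSet_Ioi) ?_
    refine (ae_restrict_iff' measurableSet_Ioi).2 (Eventually.of_forall fun u hu => ?_)
    have := hge u hu
    rw [Real.norm_of_nonneg (inv_nonneg.2 (by linarith))]
    exact inv_anti₀ (by linarith) (by linarith)
  · refine Integrable.mono' (hint'.const_mul (f B₁ - c₁)⁻¹)
      (((hcf.pow 2).inv₀ fun u hu => pow_ne_zero 2 (hne u hu)).aestronglyMeasurable
        measurableSet_Ioi) ?_
    refine (ae_restrict_iff' measurableSet_Ioi).2 (Eventually.of_forall fun u hu => ?_)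
    have := hge u hu
    rw [Real.norm_of_nonneg (inv_nonneg.2 (sq_nonneg _)), ← mul_inv]
    refine inv_anti₀ (mul_pos (by linarith) (by linarith)) ?_
    nlinarith

open MeasureTheory in
/-- Joint continuity of `(c, B) ↦ ∫_B^∞ (f - c)⁻²`, by monotone domination by the values at
`(c₁, B₁)`. -/
theorem tail_sq_continuousAt {f : ℝ → ℝ} {c₁ B₁ : ℝ} (hcont : ContinuousOn f (Ici B₁))
    (hmono : MonotoneOn f (Ici B₁)) (hpos : c₁ < f B₁)
    (hint : IntegrableOn (fun u => (f u - c₁)⁻¹) (Ioi B₁)) {c B : ℝ} (hc : c < c₁)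
    (hB : B₁ < B) :
    ContinuousAt (fun p : ℝ × ℝ => ∫ u in Ioi p.2, ((f u - p.1) ^ 2)⁻¹) (c, B) := by
  -- Moving the endpoint into the integrand makes the domain of integration constant.
  have hshift : ∀ p : ℝ × ℝ, ∫ u in Ioi p.2, ((f u - p.1) ^ 2)⁻¹ =
      ∫ v in Ioi (0 : ℝ), ((f (v + p.2) - p.1) ^ 2)⁻¹ := fun p => by
    rw [integral_Ioi_shift (fun u => ((f u - p.1) ^ 2)⁻¹) 0 p.2, zero_add]
  simp_rw [hshift]
  have hbd : IntegrableOn (fun v => ((f (v + B₁) - c₁) ^ 2)⁻¹) (Ioi 0) := by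
    rw [integrableOn_Ioi_shift (fun u => ((f u - c₁) ^ 2)⁻¹) 0 B₁, zero_add]
    exact (tail_integrable hcont hmono hpos hint le_rfl le_rfl).2
  have hN : ∀ᶠ p : ℝ × ℝ in nhds (c, B), p.1 < c₁ ∧ B₁ < p.2 :=
    (continuousAt_fst.eventually (Iio_mem_nhds hc)).and
      (continuousAt_snd.eventually (Ioi_mem_nhds hB))
  have hgt : ∀ p : ℝ × ℝ, p.1 < c₁ ∧ B₁ < p.2 → ∀ v ∈ Ioi (0 : ℝ),
      f (v + B₁) - c₁ ≤ f (v + p.2) - p.1 ∧ 0 < f (v + B₁) - c₁ := fun p hp v hv => by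
    have hv' : 0 < v := hv
    have h1 : f B₁ ≤ f (v + B₁) :=
      hmono self_mem_Ici (mem_Ici.2 (by linarith)) (by linarith)
    have h2 : f (v + B₁) ≤ f (v + p.2) :=
      hmono (mem_Ici.2 (by linarith)) (mem_Ici.2 (by linarith [hp.2])) (by linarith [hp.2])
    exact ⟨by linarith [hp.1], by linarith⟩
  refine continuousAt_of_dominated ?_ ?_ hbd ?_
  · filter_upwards [hN] with p hp
    refine ContinuousOn.aestronglyMeasurable ?_ measurableSet_Ioi
    refine ContinuousOn.inv₀ (ContinuousOn.pow (ContinuousOn.sub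
      (hcont.comp (by fun_prop) fun v hv => ?_) continuousOn_const) 2) fun v hv => ?_
    · have hv' : 0 < v := hv
      exact mem_Ici.2 (by linarith [hp.2])
    · have := hgt p hp v hv
      exact pow_ne_zero 2 (ne_of_gt (by linarith))
  · filter_upwards [hN] with p hp
    refine (ae_restrict_iff' measurableSet_Ioi).2 (Eventually.of_forall fun v hv => ?_)
    have := hgt p hp v hv
    rw [Real.norm_of_nonneg (inv_nonneg.2 (sq_nonneg _))]
    exact inv_anti₀ (by nlinarith) (by nlinarith)
  · refine (ae_restrict_iff' measurableSet_Ioi).2 (Eventually.of_forall fun v hv => ?_)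
    have hv' : 0 < v := hv
    have := hgt (c, B) ⟨hc, hB⟩ v hv
    have hf : ContinuousAt f (v + B) :=
      hcont.continuousAt (Ici_mem_nhds (by linarith))
    refine ContinuousAt.inv₀ (ContinuousAt.pow (ContinuousAt.sub ?_ continuousAt_fst) 2)
      (pow_ne_zero 2 (ne_of_gt (by simp only at this ⊢; linarith)))
    exact ContinuousAt.comp (f := fun p : ℝ × ℝ => v + p.2) (g := f) hf (by fun_prop)

open MeasureTheory in
/-- The derivative of `c ↦ ∫_B^∞ (f - c)⁻¹` in the level `c`. -/
theorem tail_hasDerivAt_level {f : ℝ → ℝ} {c₁ B₁ : ℝ} (hcont : ContinuousOn f (Ici B₁))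
    (hmono : MonotoneOn f (Ici B₁)) (hpos : c₁ < f B₁)
    (hint : IntegrableOn (fun u => (f u - c₁)⁻¹) (Ioi B₁)) {c B : ℝ} (hc : c < c₁)
    (hB : B₁ < B) :
    HasDerivAt (fun c => ∫ u in Ioi B, (f u - c)⁻¹) (∫ u in Ioi B, ((f u - c) ^ 2)⁻¹) c := by
  have hge : ∀ u ∈ Ioi B, f B₁ ≤ f u := fun u hu =>
    have : B₁ ≤ u := hB.le.trans (le_of_lt hu)
    hmono self_mem_Ici this this
  have hI := fun {c} (hc : c ≤ c₁) => tail_integrable hcont hmono hpos hint hc hB.le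
  refine (hasDerivAt_integral_of_dominated_loc_of_deriv_le
    (F := fun c u => (f u - c)⁻¹) (F' := fun c u => ((f u - c) ^ 2)⁻¹)
    (bound := fun u => ((f u - c₁) ^ 2)⁻¹)
    (Iio_mem_nhds hc) ?_ (hI hc.le).1 (hI hc.le).2.aestronglyMeasurable ?_ (hI le_rfl).2 ?_).2
  · filter_upwards [Iio_mem_nhds hc] with x hx using (hI (le_of_lt hx)).1.aestronglyMeasurable
  · refine (ae_restrict_iff' measurableSet_Ioi).2 (Eventually.of_forall fun u hu x hx => ?_)
    have := hge u hu
    have hx' : x < c₁ := hx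
    rw [Real.norm_of_nonneg (inv_nonneg.2 (sq_nonneg _))]
    exact inv_anti₀ (by nlinarith) (by nlinarith)
  · refine (ae_restrict_iff' measurableSet_Ioi).2 (Eventually.of_forall fun u hu x hx => ?_)
    have := hge u hu
    have hx' : x < c₁ := hx
    have h0 : f u - x ≠ 0 := ne_of_gt (by linarith)
    convert! ((hasDerivAt_id x).const_sub (f u)).inv h0 using 1
    simp [div_eq_mul_inv]

open MeasureTheory in
/-- The derivative of `B ↦ ∫_B^∞ (f - c)⁻¹` in the endpoint `B`. The level `c = c₁` is allowed. -/
theorem tail_hasDerivAt_endpoint {f : ℝ → ℝ} {c₁ B₁ : ℝ} (hcont : ContinuousOn f (Ici B₁))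
    (hmono : MonotoneOn f (Ici B₁)) (hpos : c₁ < f B₁)
    (hint : IntegrableOn (fun u => (f u - c₁)⁻¹) (Ioi B₁)) {c B : ℝ} (hc : c ≤ c₁)
    (hB : B₁ < B) :
    HasDerivAt (fun B => ∫ u in Ioi B, (f u - c)⁻¹) (-(f B - c)⁻¹) B := by
  have hI := (tail_integrable hcont hmono hpos hint hc le_rfl).1
  have hcA : ∀ x, B₁ < x → ContinuousAt (fun u => (f u - c)⁻¹) x := fun x hx => by
    have : f B₁ ≤ f x := hmono self_mem_Ici (mem_Ici.2 hx.le) hx.le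
    exact ContinuousAt.inv₀ ((hcont.continuousAt (Ici_mem_nhds hx)).sub continuousAt_const)
      (ne_of_gt (by linarith))
  have hii : IntervalIntegrable (fun u => (f u - c)⁻¹) volume B₁ B :=
    (intervalIntegrable_iff_integrableOn_Ioc_of_le hB.le).2 (hI.mono_set Ioc_subset_Ioi_self)
  have hd : HasDerivAt (fun B => ∫ u in B₁..B, (f u - c)⁻¹) ((f B - c)⁻¹) B := by
    refine intervalIntegral.integral_hasDerivAt_right hii ?_ (hcA B hB)
    exact ContinuousOn.stronglyMeasurableAtFilter isOpen_Ioi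
      (fun x hx => (hcA x hx).continuousWithinAt) B hB
  refine (hd.const_sub (∫ u in Ioi B₁, (f u - c)⁻¹)).congr_of_eventuallyEq ?_
  filter_upwards [Ioi_mem_nhds hB] with x hx
  rw [← intervalIntegral.integral_interval_add_Ioi hI
    (hI.mono_set (Ioi_subset_Ioi (le_of_lt hx)))]
  ring

open MeasureTheory in
/-- The level curve of `(c, B) ↦ ∫_B^∞ (f - c)⁻¹` through a point is locally the graph of a
function `φ` of `c`, whose derivative is read off from the two partial derivatives by the implicit
function theorem. -/
theorem tail_implicit {f : ℝ → ℝ} {c₁ B₁ : ℝ} (hcont : ContinuousOn f (Ici B₁))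
    (hmono : MonotoneOn f (Ici B₁)) (hpos : c₁ < f B₁)
    (hint : IntegrableOn (fun u => (f u - c₁)⁻¹) (Ioi B₁)) {c B : ℝ} (hc : c < c₁)
    (hB : B₁ < B) :
    ∃ φ : ℝ → ℝ, φ c = B ∧
      HasDerivAt φ ((f B - c) * ∫ u in Ioi B, ((f u - c) ^ 2)⁻¹) c ∧
      ∀ᶠ x in nhds c, ∫ u in Ioi (φ x), (f u - x)⁻¹ = ∫ u in Ioi B, (f u - c)⁻¹ := by
  have hN : ∀ᶠ p : ℝ × ℝ in nhds (c, B), p.1 < c₁ ∧ B₁ < p.2 :=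
    (continuousAt_fst.eventually (Iio_mem_nhds hc)).and
      (continuousAt_snd.eventually (Ioi_mem_nhds hB))
  have hfB : 0 < f B - c := by
    have : f B₁ ≤ f B := hmono self_mem_Ici (mem_Ici.2 hB.le) hB.le
    linarith
  let G : ℝ → ℝ → ℝ := fun c B => ∫ u in Ioi B, (f u - c)⁻¹
  let G₁ : ℝ → ℝ → ℝ →L[ℝ] ℝ := fun c B =>
    ContinuousLinearMap.toSpanSingleton ℝ (∫ u in Ioi B, ((f u - c) ^ 2)⁻¹)
  let G₂ : ℝ → ℝ → ℝ →L[ℝ] ℝ := fun c B =>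
    ContinuousLinearMap.toSpanSingleton ℝ (-(f B - c)⁻¹)
  have df₁ : ∀ᶠ v in nhds (c, B), HasFDerivAt (G · v.2) (G₁ v.1 v.2) v.1 := by
    filter_upwards [hN] with p hp
    exact (tail_hasDerivAt_level hcont hmono hpos hint hp.1 hp.2).hasFDerivAt
  have df₂ : ∀ᶠ v in nhds (c, B), HasFDerivAt (G v.1 ·) (G₂ v.1 v.2) v.2 := by
    filter_upwards [hN] with p hp
    exact (tail_hasDerivAt_endpoint hcont hmono hpos hint hp.1.le hp.2).hasFDerivAt
  have hL : Continuous fun x : ℝ => ContinuousLinearMap.toSpanSingleton ℝ x :=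
    (ContinuousLinearMap.toSpanSingletonCLE (𝕜 := ℝ) (E := ℝ)).continuous
  have cf₁ : ContinuousAt (Function.uncurry G₁) (c, B) :=
    hL.continuousAt.comp (tail_sq_continuousAt hcont hmono hpos hint hc hB)
  have cf₂ : ContinuousAt (Function.uncurry G₂) (c, B) := by
    refine hL.continuousAt.comp (f := fun p : ℝ × ℝ => -(f p.2 - p.1)⁻¹) ?_
    refine (ContinuousAt.inv₀ (ContinuousAt.sub ?_ continuousAt_fst) hfB.ne').neg
    exact ContinuousAt.comp (f := fun p : ℝ × ℝ => p.2) (g := f)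
      (hcont.continuousAt (Ici_mem_nhds hB)) continuousAt_snd
  have hne : -(f B - c)⁻¹ ≠ 0 := neg_ne_zero.2 (inv_ne_zero hfB.ne')
  have hinv : (G₂ c B).IsInvertible := by
    refine ⟨ContinuousLinearEquiv.unitsEquivAut ℝ (Units.mk0 _ hne), ?_⟩
    ext
    simp [G₂]
  refine ⟨implicitFunctionOfBivariate (u := (c, B)) df₁ df₂ cf₁ cf₂ hinv, ?_, ?_, ?_⟩
  · exact (eventually_apply_eq_iff_implicitFunctionOfBivariate (u := (c, B))
      df₁ df₂ cf₁ cf₂ hinv).self_of_nhds.1 rfl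
  · have := (hasStrictFDerivAt_implicitFunctionOfBivariate (u := (c, B))
      df₁ df₂ cf₁ cf₂ hinv).hasFDerivAt.hasDerivAt
    convert! this using 1
    apply hinv.injective
    have h1 : (G₂ c B) ((G₂ c B).inverse (G₁ c B 1)) = G₁ c B 1 := by
      simp [hinv]
    simp only [ContinuousLinearMap.comp_apply, neg_apply, map_neg]
    rw [h1]
    simp only [G₁, G₂, ContinuousLinearMap.toSpanSingleton_apply, smul_eq_mul]
    field_simp
  · exact eventually_apply_implicitFunctionOfBivariate (u := (c, B)) df₁ df₂ cf₁ cf₂ hinv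

/-! ### Continuously differentiable convex functions -/

/-- On the open up-closed set `U`, the function `f` is continuously differentiable and its
derivative is non-decreasing. Used with `f = ψ` and `U = (θ_∞, ∞)`. -/
structure IsConvexC1 (f : ℝ → ℝ) (U : Set ℝ) : Prop where
  isOpen : IsOpen U
  upper : ∀ s ∈ U, ∀ t, s ≤ t → t ∈ U
  diff : ∀ t ∈ U, HasDerivAt f (deriv f t) t
  cont : ∀ t ∈ U, ContinuousAt (deriv f) t
  mono : ∀ s ∈ U, ∀ t, s ≤ t → deriv f s ≤ deriv f t

/-- By the mean value theorem `f'` is positive somewhere strictly between `θ` and `y + θ`, and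
hence from there on. -/
theorem IsConvexC1.exists_deriv_pos {f : ℝ → ℝ} {U : Set ℝ} (D : IsConvexC1 f U) {θ y : ℝ}
    (hθ : θ ∈ U) (hy : 0 < y) (hpos : 0 < f (y + θ) - f θ) :
    ∃ ξ, θ < ξ ∧ ξ < y + θ ∧ 0 < deriv f ξ ∧ StrictMonoOn f (Ici ξ) ∧
      ContinuousOn f (Ici ξ) := by
  obtain ⟨ξ, hξ, hd⟩ := exists_deriv_eq_slope f (a := θ) (b := y + θ) (by linarith)
    (fun x hx => (D.diff x (D.upper θ hθ x hx.1)).continuousAt.continuousWithinAt)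
    (fun x hx => (D.diff x (D.upper θ hθ x hx.1.le)).differentiableAt.differentiableWithinAt)
  have hξU : ξ ∈ U := D.upper θ hθ ξ hξ.1.le
  have hd0 : 0 < deriv f ξ := by
    rw [hd]
    exact div_pos hpos (by linarith)
  have hc : ContinuousOn f (Ici ξ) := fun x hx =>
    (D.diff x (D.upper ξ hξU x hx)).continuousAt.continuousWithinAt
  refine ⟨ξ, hξ.1, hξ.2, hd0, strictMonoOn_of_deriv_pos (convex_Ici ξ) hc fun x hx => ?_, hc⟩
  rw [interior_Ici] at hx
  exact hd0.trans_le (D.mono ξ hξU x (le_of_lt hx))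

theorem IsConvexC1.tendsto_atTop {f : ℝ → ℝ} {U : Set ℝ} (D : IsConvexC1 f U) {ξ : ℝ}
    (hξ : ξ ∈ U) (hpos : 0 < deriv f ξ) : Tendsto f atTop atTop := by
  have hb : ∀ᶠ u in atTop, f ξ + deriv f ξ * (u - ξ) ≤ f u := by
    filter_upwards [eventually_ge_atTop ξ] with u hu
    have := (convex_Ici ξ).mul_sub_le_image_sub_of_le_deriv (f := f) (C := deriv f ξ)
      (fun x hx => (D.diff x (D.upper ξ hξ x hx)).continuousAt.continuousWithinAt)
      (fun x hx => (D.diff x (D.upper ξ hξ x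
        (interior_subset hx))).differentiableAt.differentiableWithinAt)
      (fun x hx => D.mono ξ hξ x (interior_subset hx)) ξ self_mem_Ici u hu hu
    linarith
  refine tendsto_atTop_mono' _ hb (tendsto_atTop_add_const_left _ _ ?_)
  exact (tendsto_atTop_add_const_right _ (-ξ) tendsto_id).const_mul_atTop hpos

/-- The set of `y > 0` with `f (y + θ) > f θ` is up-closed, by convexity. -/
theorem IsConvexC1.shift_pos {f : ℝ → ℝ} {U : Set ℝ} (D : IsConvexC1 f U) {θ y r : ℝ}
    (hθ : θ ∈ U) (hy : 0 < y) (hpos : 0 < f (y + θ) - f θ) (hr : y ≤ r) :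
    0 < f (r + θ) - f θ := by
  obtain ⟨ξ, h1, h2, -, hm, -⟩ := D.exists_deriv_pos hθ hy hpos
  have := hm.monotoneOn (mem_Ici.2 h2.le) (mem_Ici.2 (by linarith : ξ ≤ r + θ))
    (by linarith)
  linarith

/-! ### The inverse of the explosion time -/

/-- The integral `∫_y^∞ dr / (f (r + θ) - f θ)`, that is `∫_y^∞ dr / ψ_θ(r)` when `f = ψ`. As a
Bochner integral it is `0` when the integrand is not integrable, so that a positive value
certifies integrability. -/
noncomputable def explosionTime (f : ℝ → ℝ) (θ y : ℝ) : ℝ :=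
  ∫ r in Ioi y, (f (r + θ) - f θ)⁻¹

/-- For each `θ ∈ U`, the map `b θ` is a right inverse of `explosionTime f θ` on `(0, ∞)` with
values in the region where `f (· + θ) - f θ` is positive. -/
def IsInverseFlow (f : ℝ → ℝ) (U : Set ℝ) (b : ℝ → ℝ → ℝ) : Prop :=
  ∀ θ ∈ U, ∀ a, 0 < a →
    0 < b θ a ∧ 0 < f (b θ a + θ) - f θ ∧ explosionTime f θ (b θ a) = a

open MeasureTheory in
theorem integrableOn_of_explosionTime_pos {f : ℝ → ℝ} {θ y : ℝ}
    (h : 0 < explosionTime f θ y) :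
    IntegrableOn (fun r => (f (r + θ) - f θ)⁻¹) (Ioi y) := by
  by_contra hn
  have : explosionTime f θ y = 0 := integral_undef hn
  linarith

open MeasureTheory in
theorem IsConvexC1.explosionTime_lt {f : ℝ → ℝ} {U : Set ℝ} (D : IsConvexC1 f U) {θ y z : ℝ}
    (hθ : θ ∈ U) (hy : 0 < y) (hpos : 0 < f (y + θ) - f θ)
    (hint : 0 < explosionTime f θ y) (hyz : y < z) :
    0 < explosionTime f θ z ∧ explosionTime f θ z < explosionTime f θ y := by
  have hI := integrableOn_of_explosionTime_pos hint
  have hI2 := hI.mono_set (Ioi_subset_Ioi hyz.le)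
  have hp : ∀ r, y ≤ r → 0 < (f (r + θ) - f θ)⁻¹ := fun r hr =>
    inv_pos.2 (D.shift_pos hθ hy hpos hr)
  constructor
  · refine (setIntegral_pos_iff_support_of_nonneg_ae ?_ hI2).2 ?_
    · exact (ae_restrict_iff' measurableSet_Ioi).2
        (Eventually.of_forall fun r hr => (hp r (hyz.le.trans (le_of_lt hr))).le)
    · have : Ioi z ⊆ (Function.support fun r => (f (r + θ) - f θ)⁻¹) ∩ Ioi z :=
        fun r hr => ⟨(hp r (hyz.le.trans (le_of_lt hr))).ne', hr⟩
      refine lt_of_lt_of_le ?_ (measure_mono this)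
      simp
  · have h1 := intervalIntegral.integral_interval_add_Ioi hI hI2
    have h2 : 0 < ∫ r in y..z, (f (r + θ) - f θ)⁻¹ :=
      intervalIntegral.intervalIntegral_pos_of_pos_on
        ((intervalIntegrable_iff_integrableOn_Ioc_of_le hyz.le).2
          (hI.mono_set Ioc_subset_Ioi_self)) (fun r hr => hp r hr.1.le) hyz
    unfold explosionTime
    linarith

theorem IsConvexC1.explosionTime_injective {f : ℝ → ℝ} {U : Set ℝ} (D : IsConvexC1 f U)
    {θ y z : ℝ} (hθ : θ ∈ U) (hy : 0 < y) (hypos : 0 < f (y + θ) - f θ) (hz : 0 < z)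
    (hzpos : 0 < f (z + θ) - f θ) (hint : 0 < explosionTime f θ y)
    (heq : explosionTime f θ y = explosionTime f θ z) : y = z := by
  rcases lt_trichotomy y z with h | h | h
  · linarith [(D.explosionTime_lt hθ hy hypos hint h).2]
  · exact h
  · linarith [(D.explosionTime_lt hθ hz hzpos (heq ▸ hint) h).2]

theorem IsInverseFlow.strictAnti {f : ℝ → ℝ} {U : Set ℝ} {b : ℝ → ℝ → ℝ}
    (hb : IsInverseFlow f U b) (D : IsConvexC1 f U) {θ s t : ℝ} (hθ : θ ∈ U) (hs : 0 < s)
    (hst : s < t) : b θ t < b θ s := by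
  obtain ⟨h1, h2, h3⟩ := hb θ hθ s hs
  obtain ⟨-, -, h3'⟩ := hb θ hθ t (hs.trans hst)
  by_contra! hle
  rcases hle.eq_or_lt with h | h
  · rw [← h] at h3'
    linarith
  · linarith [(D.explosionTime_lt hθ h1 h2 (by linarith) h).2]

/-- Supplies the hypotheses of the tail lemmas on a neighbourhood: beyond `b θ t + θ` the function
`f` is continuous and monotone, and `1 / (f - c₁)` stays integrable for a level `c₁` strictly above
`f θ`. Applied with `t > h`, it leaves room around both `c = f θ` and `B = b θ h + θ`. -/
theorem IsInverseFlow.exists_tail {f : ℝ → ℝ} {U : Set ℝ} {b : ℝ → ℝ → ℝ}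
    (hb : IsInverseFlow f U b) (D : IsConvexC1 f U) {θ t : ℝ} (hθ : θ ∈ U) (ht : 0 < t) :
    ContinuousOn f (Ici (b θ t + θ)) ∧ MonotoneOn f (Ici (b θ t + θ)) ∧ ∃ c₁, f θ < c₁ ∧
      c₁ < f (b θ t + θ) ∧
      MeasureTheory.IntegrableOn (fun u => (f u - c₁)⁻¹) (Ioi (b θ t + θ)) := by
  obtain ⟨h1, h2, h3⟩ := hb θ hθ t ht
  obtain ⟨ξ, -, hξ, -, hm, hc⟩ := D.exists_deriv_pos hθ h1 h2
  have hsub : Ici (b θ t + θ) ⊆ Ici ξ := Ici_subset_Ici.2 hξ.le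
  have hm' := (hm.mono hsub).monotoneOn
  have hc' := hc.mono hsub
  refine ⟨hc', hm', (f θ + f (b θ t + θ)) / 2, by linarith, by linarith, ?_⟩
  have hI : MeasureTheory.IntegrableOn (fun u => (f u - f θ)⁻¹) (Ioi (b θ t + θ)) :=
    (integrableOn_Ioi_shift (fun u => (f u - f θ)⁻¹) (b θ t) θ).1
      (integrableOn_of_explosionTime_pos (by linarith))
  have hge : ∀ u ∈ Ioi (b θ t + θ), f (b θ t + θ) ≤ f u := fun u hu =>
    hm' self_mem_Ici (mem_Ici.2 (le_of_lt hu)) (le_of_lt hu)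
  refine MeasureTheory.Integrable.mono' (hI.const_mul 2)
    (ContinuousOn.aestronglyMeasurable (((hc'.mono Ioi_subset_Ici_self).sub
      continuousOn_const).inv₀ fun u hu => ?_) measurableSet_Ioi) ?_
  · have := hge u hu
    show f u - (f θ + f (b θ t + θ)) / 2 ≠ 0
    exact ne_of_gt (by linarith)
  · refine (MeasureTheory.ae_restrict_iff' measurableSet_Ioi).2
      (Eventually.of_forall fun u hu => ?_)
    have := hge u hu
    rw [Real.norm_of_nonneg (inv_nonneg.2 (by linarith)), ← div_eq_mul_inv,
      le_div_iff₀ (by linarith), inv_mul_le_iff₀ (by linarith)]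
    linarith

/-! ### Differentiability in `θ` -/

/-- The derivative of `θ ↦ b θ h`. With `B = b θ h + θ` and `c = f θ`, the defining relation
becomes `∫_B^∞ du / (f u - c) = h`, which depends on `θ` only through `c` and `B`; so
`b t h + t = φ (f t)` with `φ` from `tail_implicit`. -/
theorem IsInverseFlow.hasDerivAt {f : ℝ → ℝ} {U : Set ℝ} {b : ℝ → ℝ → ℝ}
    (hb : IsInverseFlow f U b) (D : IsConvexC1 f U) {θ h : ℝ} (hθ : θ ∈ U) (hh : 0 < h) :
    HasDerivAt (fun t => b t h)
      ((f (b θ h + θ) - f θ) * (∫ u in Ioi (b θ h + θ), ((f u - f θ) ^ 2)⁻¹) * deriv f θ - 1)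
      θ := by
  obtain ⟨hc, hm, c₁, hc₁, hc₁', hI⟩ := hb.exists_tail D hθ (by linarith : 0 < h + 1)
  have hlt := hb.strictAnti D hθ hh (by linarith : h < h + 1)
  obtain ⟨φ, hφ0, hφ', hφ⟩ := tail_implicit hc hm hc₁' hI (c := f θ) (B := b θ h + θ) hc₁
    (by linarith)
  obtain ⟨h1, h2, h3⟩ := hb θ hθ h hh
  have hfd := D.diff θ hθ
  have hd : HasDerivAt (fun t => φ (f t) - t)
      ((f (b θ h + θ) - f θ) * (∫ u in Ioi (b θ h + θ), ((f u - f θ) ^ 2)⁻¹) * deriv f θ - 1)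
      θ := (hφ'.comp θ hfd).sub (hasDerivAt_id θ)
  refine hd.congr_of_eventuallyEq ?_
  have e1 : ∀ᶠ t in nhds θ, 0 < φ (f t) - t :=
    hd.continuousAt.eventually (lt_mem_nhds (by simpa [hφ0] using h1))
  have e2 : ∀ᶠ t in nhds θ, 0 < f (φ (f t)) - f t := by
    have hcc : ContinuousAt (fun t => f (φ (f t)) - f t) θ := by
      have h5 : ContinuousAt (fun t => φ (f t)) θ :=
        (hφ'.comp θ hfd).continuousAt
      refine ContinuousAt.sub (ContinuousAt.comp (g := f) ?_ h5) hfd.continuousAt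
      rw [hφ0]
      exact (D.diff _ (D.upper θ hθ _ (by linarith))).continuousAt
    exact hcc.eventually (lt_mem_nhds (by simpa [hφ0] using h2))
  filter_upwards [e1, e2, hfd.continuousAt.eventually hφ, D.isOpen.mem_nhds hθ] with t k1 k2 k3 k4
  obtain ⟨m1, m2, m3⟩ := hb t k4 h hh
  refine D.explosionTime_injective k4 m1 m2 k1 (by simpa using k2) (by linarith) ?_
  have s1 := integral_Ioi_shift (fun u => (f u - f t)⁻¹) (φ (f t) - t) t
  have s2 := integral_Ioi_shift (fun u => (f u - f θ)⁻¹) (b θ h) θ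
  rw [m3]
  unfold explosionTime at h3 ⊢
  rw [s1, sub_add_cancel, k3, ← s2, h3]

theorem IsInverseFlow.continuousAt_deriv {f : ℝ → ℝ} {U : Set ℝ} {b : ℝ → ℝ → ℝ}
    (hb : IsInverseFlow f U b) (D : IsConvexC1 f U) {θ h : ℝ} (hθ : θ ∈ U) (hh : 0 < h) :
    ContinuousAt (deriv fun t => b t h) θ := by
  obtain ⟨hc, hm, c₁, hc₁, hc₁', hI⟩ := hb.exists_tail D hθ (by linarith : 0 < h + 1)
  have hlt := hb.strictAnti D hθ hh (by linarith : h < h + 1)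
  have hK := tail_sq_continuousAt hc hm hc₁' hI (c := f θ) (B := b θ h + θ) hc₁ (by linarith)
  have hfc := (D.diff θ hθ).continuousAt
  have hB : ContinuousAt (fun t => b t h + t) θ :=
    (hb.hasDerivAt D hθ hh).continuousAt.add continuousAt_id
  have hfB : ContinuousAt (fun t => f (b t h + t)) θ := ContinuousAt.comp (g := f)
    (D.diff _ (D.upper θ hθ _ (by linarith [(hb θ hθ h hh).1]))).continuousAt hB
  have hK' : ContinuousAt (fun t => ∫ u in Ioi (b t h + t), ((f u - f t) ^ 2)⁻¹) θ :=
    ContinuousAt.comp (f := fun t => (f t, b t h + t))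
      (g := fun p : ℝ × ℝ => ∫ u in Ioi p.2, ((f u - p.1) ^ 2)⁻¹) hK (hfc.prodMk hB)
  refine ((((hfB.sub hfc).mul hK').mul (D.cont θ hθ)).sub
    (continuousAt_const (y := (1 : ℝ)))).congr ?_
  filter_upwards [D.isOpen.mem_nhds hθ] with t ht
  exact (hb.hasDerivAt D ht hh).deriv.symm

open MeasureTheory in
/-- Splits `γ_θ / ψ_θ²` into `ψ_θ' / ψ_θ²`, which is an exact derivative, and a multiple of
`1 / ψ_θ²`. -/
theorem IsConvexC1.integral_gamma {f : ℝ → ℝ} {U : Set ℝ} (D : IsConvexC1 f U) {θ y : ℝ}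
    (hθ : θ ∈ U) (hy : 0 < y) (hpos : 0 < f (y + θ) - f θ)
    (hsq : IntegrableOn (fun r => ((f (r + θ) - f θ) ^ 2)⁻¹) (Ioi y)) :
    ∫ r in Ioi y, (deriv f (r + θ) - deriv f θ) / (f (r + θ) - f θ) ^ 2 =
      (f (y + θ) - f θ)⁻¹ - deriv f θ * ∫ r in Ioi y, ((f (r + θ) - f θ) ^ 2)⁻¹ := by
  obtain ⟨ξ, h1, h2, hd, -, -⟩ := D.exists_deriv_pos hθ hy hpos
  have hp : ∀ r, y ≤ r → 0 < f (r + θ) - f θ := fun r hr => D.shift_pos hθ hy hpos hr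
  have hξ : ξ ∈ U := D.upper θ hθ ξ h1.le
  have hder : ∀ r ∈ Ici y, HasDerivAt (fun r => (f (r + θ) - f θ)⁻¹)
      (-deriv f (r + θ) / (f (r + θ) - f θ) ^ 2) r := fun r hr => by
    have hr' : y ≤ r := hr
    have := (D.diff (r + θ) (D.upper θ hθ _ (by linarith))).comp_add_const r θ
    exact (this.sub_const (f θ)).inv (hp r hr).ne'
  have hlim : Tendsto (fun r => (f (r + θ) - f θ)⁻¹) atTop (nhds 0) := by
    refine tendsto_inv_atTop_zero.comp (tendsto_atTop_add_const_right _ (-f θ) ?_)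
    exact (D.tendsto_atTop hξ hd).comp (tendsto_atTop_add_const_right _ θ tendsto_id)
  have hneg : ∀ r ∈ Ioi y, -deriv f (r + θ) / (f (r + θ) - f θ) ^ 2 ≤ 0 := fun r hr => by
    have hr' : y < r := hr
    have : 0 < deriv f (r + θ) := hd.trans_le (D.mono ξ hξ _ (by linarith))
    exact div_nonpos_of_nonpos_of_nonneg (by linarith) (sq_nonneg _)
  have hI := integrableOn_Ioi_deriv_of_nonpos' hder hneg hlim
  have hval := integral_Ioi_of_hasDerivAt_of_tendsto' hder hI hlim
  have hsplit : (fun r => (deriv f (r + θ) - deriv f θ) / (f (r + θ) - f θ) ^ 2) = fun r =>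
      -(-deriv f (r + θ) / (f (r + θ) - f θ) ^ 2) -
        deriv f θ * ((f (r + θ) - f θ) ^ 2)⁻¹ := by
    ext r
    ring
  have hI' : IntegrableOn (fun r => -(-deriv f (r + θ) / (f (r + θ) - f θ) ^ 2)) (Ioi y) :=
    hI.neg
  rw [hsplit, integral_sub hI' (hsq.const_mul _), integral_neg, hval, integral_const_mul]
  ring

/-! ### Change of variables along the inverse -/

theorem IsInverseFlow.hasDerivAt_explosionTime {f : ℝ → ℝ} {U : Set ℝ} {b : ℝ → ℝ → ℝ}
    (hb : IsInverseFlow f U b) (D : IsConvexC1 f U) {θ t r : ℝ} (hθ : θ ∈ U) (ht : 0 < t)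
    (hr : b θ t < r) :
    HasDerivAt (explosionTime f θ) (-(f (r + θ) - f θ)⁻¹) r := by
  obtain ⟨hc, hm, c₁, hc₁, hc₁', hI⟩ := hb.exists_tail D hθ ht
  have := (tail_hasDerivAt_endpoint hc hm hc₁' hI (c := f θ) (B := r + θ) hc₁.le
    (by linarith)).comp_add_const r θ
  refine this.congr_of_eventuallyEq (Eventually.of_forall fun y => ?_)
  exact integral_Ioi_shift (fun u => (f u - f θ)⁻¹) y θ

theorem IsInverseFlow.explosionTime_mem {f : ℝ → ℝ} {U : Set ℝ} {b : ℝ → ℝ → ℝ}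
    (hb : IsInverseFlow f U b) (D : IsConvexC1 f U) {θ t r : ℝ} (hθ : θ ∈ U) (ht : 0 < t)
    (hr : b θ t < r) :
    0 < explosionTime f θ r ∧ explosionTime f θ r < t ∧ b θ (explosionTime f θ r) = r := by
  obtain ⟨h1, h2, h3⟩ := hb θ hθ t ht
  obtain ⟨k1, k2⟩ := D.explosionTime_lt hθ h1 h2 (by linarith) hr
  obtain ⟨m1, m2, m3⟩ := hb θ hθ _ k1
  refine ⟨k1, by linarith, ?_⟩
  exact D.explosionTime_injective hθ m1 m2 (h1.trans hr) (D.shift_pos hθ h1 h2 hr.le)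
    (by linarith) m3

theorem IsInverseFlow.image_Ioi {f : ℝ → ℝ} {U : Set ℝ} {b : ℝ → ℝ → ℝ}
    (hb : IsInverseFlow f U b) (D : IsConvexC1 f U) {θ t : ℝ} (hθ : θ ∈ U) (ht : 0 < t) :
    explosionTime f θ '' Ioi (b θ t) = Ioo 0 t := by
  ext a
  constructor
  · rintro ⟨r, hr, rfl⟩
    obtain ⟨h1, h2, -⟩ := hb.explosionTime_mem D hθ ht hr
    exact ⟨h1, h2⟩
  · rintro ⟨h1, h2⟩
    exact ⟨b θ a, hb.strictAnti D hθ h1 h2, (hb θ hθ a h1).2.2⟩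

theorem IsInverseFlow.image_Ioo {f : ℝ → ℝ} {U : Set ℝ} {b : ℝ → ℝ → ℝ}
    (hb : IsInverseFlow f U b) (D : IsConvexC1 f U) {θ s t : ℝ} (hθ : θ ∈ U) (hs : 0 < s)
    (ht : 0 < t) :
    explosionTime f θ '' Ioo (b θ t) (b θ s) = Ioo s t := by
  ext a
  constructor
  · rintro ⟨r, hr, rfl⟩
    obtain ⟨h1, h2, h3⟩ := hb.explosionTime_mem D hθ ht hr.1
    refine ⟨?_, h2⟩
    by_contra! hle
    rcases hle.eq_or_lt with h | h
    · rw [h] at h3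
      linarith [hr.2]
    · linarith [hb.strictAnti D hθ h1 h, hr.2]
  · rintro ⟨h1, h2⟩
    exact ⟨b θ a, ⟨hb.strictAnti D hθ (hs.trans h1) h2, hb.strictAnti D hθ hs h1⟩,
      (hb θ hθ a (hs.trans h1)).2.2⟩

/-- The change of variables `a = explosionTime f θ r`, that is `r = b θ a`. -/
theorem IsInverseFlow.integral_image {f : ℝ → ℝ} {U : Set ℝ} {b : ℝ → ℝ → ℝ}
    (hb : IsInverseFlow f U b) (D : IsConvexC1 f U) {θ t : ℝ} (hθ : θ ∈ U) (ht : 0 < t)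
    {S : Set ℝ} (hS : MeasurableSet S) (hSt : S ⊆ Ioi (b θ t)) (g : ℝ → ℝ) :
    ∫ a in explosionTime f θ '' S, g (b θ a) = ∫ r in S, g r / (f (r + θ) - f θ) := by
  have hanti : AntitoneOn (explosionTime f θ) S := fun x hx y hy hxy => by
    obtain ⟨h1, h2, -⟩ := hb θ hθ t ht
    rcases hxy.eq_or_lt with rfl | h
    · exact le_rfl
    · exact (D.explosionTime_lt hθ (h1.trans (hSt hx))
        (D.shift_pos hθ h1 h2 (le_of_lt (hSt hx)))
        (hb.explosionTime_mem D hθ ht (hSt hx)).1 h).2.le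
  rw [MeasureTheory.integral_image_eq_integral_deriv_smul_of_antitoneOn hS
    (fun r hr => (hb.hasDerivAt_explosionTime D hθ ht (hSt hr)).hasDerivWithinAt) hanti]
  refine MeasureTheory.setIntegral_congr_fun hS fun r hr => ?_
  simp only [(hb.explosionTime_mem D hθ ht (hSt hr)).2.2, smul_eq_mul, neg_neg]
  rw [div_eq_inv_mul]

theorem IsInverseFlow.integral_gamma_eq {f : ℝ → ℝ} {U : Set ℝ} {b : ℝ → ℝ → ℝ}
    (hb : IsInverseFlow f U b) (D : IsConvexC1 f U) {θ h : ℝ} (hθ : θ ∈ U) (hh : 0 < h) :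
    ∫ a in (0 : ℝ)..h, (deriv f (b θ a + θ) - deriv f θ) / (f (b θ a + θ) - f θ) =
      ∫ r in Ioi (b θ h), (deriv f (r + θ) - deriv f θ) / (f (r + θ) - f θ) ^ 2 := by
  rw [intervalIntegral.integral_of_le hh.le, MeasureTheory.integral_Ioc_eq_integral_Ioo,
    ← hb.image_Ioi D hθ hh, hb.integral_image D hθ hh measurableSet_Ioi Subset.rfl
      (fun r => (deriv f (r + θ) - deriv f θ) / (f (r + θ) - f θ))]
  refine MeasureTheory.setIntegral_congr_fun measurableSet_Ioi fun r _ => ?_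
  simp only [div_div, sq]

/-- Since `∂_a ψ_θ(b^θ(a)) = -ψ_θ'(b^θ(a)) ψ_θ(b^θ(a))`, the integral of
`γ_θ(b^θ(a)) = ψ_θ'(b^θ(a)) - ψ'(θ)` is a difference of values of `log ψ_θ(b^θ(a))`, up to a
linear term. -/
theorem IsInverseFlow.integral_gamma_log {f : ℝ → ℝ} {U : Set ℝ} {b : ℝ → ℝ → ℝ}
    (hb : IsInverseFlow f U b) (D : IsConvexC1 f U) {θ s h : ℝ} (hθ : θ ∈ U) (hs : 0 < s)
    (hsh : s < h) :
    ∫ a in s..h, (deriv f (b θ a + θ) - deriv f θ) =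
      Real.log (f (b θ s + θ) - f θ) - Real.log (f (b θ h + θ) - f θ) -
        deriv f θ * (h - s) := by
  have hh : 0 < h := hs.trans hsh
  have hlt := hb.strictAnti D hθ hs hsh
  have hlt' := hb.strictAnti D hθ hh (by linarith : h < h + 1)
  obtain ⟨h1, h2, h3⟩ := hb θ hθ h hh
  obtain ⟨-, -, h3'⟩ := hb θ hθ s hs
  rw [intervalIntegral.integral_of_le hsh.le, MeasureTheory.integral_Ioc_eq_integral_Ioo,
    ← hb.image_Ioo D hθ hs hh, hb.integral_image D hθ hh measurableSet_Ioo
      (fun r hr => hr.1) (fun r => deriv f (r + θ) - deriv f θ),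
    ← MeasureTheory.integral_Ioc_eq_integral_Ioo, ← intervalIntegral.integral_of_le hlt.le]
  have hp : ∀ r ∈ uIcc (b θ h) (b θ s), 0 < f (r + θ) - f θ ∧ r + θ ∈ U ∧ b θ (h + 1) < r := by
    intro r hr
    rw [uIcc_of_le hlt.le] at hr
    exact ⟨D.shift_pos hθ h1 h2 hr.1, D.upper θ hθ _ (by linarith [hr.1]),
      hlt'.trans_le hr.1⟩
  -- The second summand contributes the subtracted `deriv f θ` of the integrand.
  have hder : ∀ r ∈ uIcc (b θ h) (b θ s), HasDerivAt
      (fun r => Real.log (f (r + θ) - f θ) + deriv f θ * explosionTime f θ r)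
      ((deriv f (r + θ) - deriv f θ) / (f (r + θ) - f θ)) r := fun r hr => by
    obtain ⟨k1, k2, k3⟩ := hp r hr
    have d1 := (((D.diff (r + θ) k2).comp_add_const r θ).sub_const (f θ)).log k1.ne'
    have d2 := (hb.hasDerivAt_explosionTime D hθ (by linarith) k3).const_mul (deriv f θ)
    convert! d1.add d2 using 1
    ring
  rw [intervalIntegral.integral_eq_sub_of_hasDerivAt hder, h3, h3']
  · ring
  · refine ContinuousOn.intervalIntegrable fun r hr => ContinuousAt.continuousWithinAt ?_
    obtain ⟨k1, k2, -⟩ := hp r hr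
    have c0 : ContinuousAt (fun r => r + θ) r := by fun_prop
    have c1 : ContinuousAt (fun r => f (r + θ)) r :=
      ContinuousAt.comp (g := f) (f := fun r => r + θ) (D.diff _ k2).continuousAt c0
    have c2 : ContinuousAt (fun r => deriv f (r + θ)) r :=
      ContinuousAt.comp (g := deriv f) (f := fun r => r + θ) (D.cont _ k2) c0
    exact (c2.sub continuousAt_const).div (c1.sub continuousAt_const) (ne_of_gt k1)

/-- By `IsInverseFlow.integral_gamma_log` the exponential equals
`ψ_θ(b^θ(h)) / ψ_θ(b^θ(h - a))`, after which reversing time gives the claim. -/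
theorem IsInverseFlow.integral_gamma_exp {f : ℝ → ℝ} {U : Set ℝ} {b : ℝ → ℝ → ℝ}
    (hb : IsInverseFlow f U b) (D : IsConvexC1 f U) {θ h : ℝ} (hθ : θ ∈ U) (hh : 0 < h) :
    ∫ a in (0 : ℝ)..h, (deriv f (b θ (h - a) + θ) - deriv f θ) *
        Real.exp (-(deriv f θ) * a -
          ∫ x in (0 : ℝ)..a, (deriv f (b θ (h - x) + θ) - deriv f θ)) =
      (f (b θ h + θ) - f θ) *
        ∫ a in (0 : ℝ)..h, (deriv f (b θ a + θ) - deriv f θ) / (f (b θ a + θ) - f θ) := by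
  have hrev := intervalIntegral.integral_comp_sub_left (a := 0) (b := h)
    (fun a => (deriv f (b θ a + θ) - deriv f θ) / (f (b θ a + θ) - f θ)) h
  rw [sub_self, sub_zero] at hrev
  rw [← hrev, ← intervalIntegral.integral_const_mul, intervalIntegral.integral_of_le hh.le,
    intervalIntegral.integral_of_le hh.le, MeasureTheory.integral_Ioc_eq_integral_Ioo,
    MeasureTheory.integral_Ioc_eq_integral_Ioo]
  refine MeasureTheory.setIntegral_congr_fun measurableSet_Ioo fun a ha => ?_
  have hs : 0 < h - a := by linarith [ha.2]
  have hin := intervalIntegral.integral_comp_sub_left (a := 0) (b := a)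
    (fun a => deriv f (b θ a + θ) - deriv f θ) h
  rw [sub_zero, hb.integral_gamma_log D hθ hs (by linarith [ha.1])] at hin
  rw [hin, show -(deriv f θ) * a - (Real.log (f (b θ (h - a) + θ) - f θ) -
    Real.log (f (b θ h + θ) - f θ) - deriv f θ * (h - (h - a))) =
    Real.log (f (b θ h + θ) - f θ) - Real.log (f (b θ (h - a) + θ) - f θ) by ring,
    Real.exp_sub, Real.exp_log (hb θ hθ h hh).2.1, Real.exp_log (hb θ hθ _ hs).2.1]
  ring

/-! ### The formulas for the branching mechanism -/

theorem isConvexC1_psi (α : ℝ) {β : ℝ} (hβ : 0 ≤ β) {ν : MeasureTheory.Measure ℝ}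
    (hν : IsLevyMeasure ν) : IsConvexC1 (psi α β ν) {t : ℝ | thetaInf ν < (t : EReal)} where
  isOpen := isOpen_Ioi.preimage continuous_coe_real_ereal
  upper s hs t hst := lt_of_lt_of_le hs (EReal.coe_le_coe_iff.2 hst)
  diff t ht := (hasDerivAt_psi α β hν ht).differentiableAt.hasDerivAt
  cont t ht := by
    refine (continuousAt_psiDeriv α β hν ht).congr ?_
    filter_upwards [(isOpen_Ioi.preimage continuous_coe_real_ereal).mem_nhds
      (show t ∈ (fun x : ℝ => (x : EReal)) ⁻¹' Ioi (thetaInf ν) from ht)] with s hs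
    exact (hasDerivAt_psi α β hν hs).deriv.symm
  mono s hs t hst := by
    rw [(hasDerivAt_psi α β hν hs).deriv,
      (hasDerivAt_psi α β hν (lt_of_lt_of_le hs (EReal.coe_le_coe_iff.2 hst))).deriv]
    exact psiDeriv_mono α hβ hν hs hst

/-- The hypothesis on `b` makes it an inverse flow for `ψ`. The point is the positivity of
`ψ_θ(b θ a)`. -/
theorem isInverseFlow_psi {α β : ℝ} (hβ : 0 ≤ β) {ν : MeasureTheory.Measure ℝ}
    (hν : IsLevyMeasure ν) {b : ℝ → ℝ → ℝ}
    (hb : ∀ θ : ℝ, thetaInf ν < (θ : EReal) → ∀ a, 0 < a →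
      qTheta α β ν θ < b θ a ∧
        ∫ r in Set.Ioi (b θ a), (psiShift α β ν θ r)⁻¹ = a) :
    IsInverseFlow (psi α β ν) {t : ℝ | thetaInf ν < (t : EReal)} b := by
  intro θ hθ a ha
  have D := isConvexC1_psi α hβ hν
  obtain ⟨hq, hI⟩ := hb θ hθ a ha
  have h0 : 0 ≤ qTheta α β ν θ := Real.sSup_nonneg fun x hx => by
    rcases hx with hx | hx
    · exact (mem_singleton_iff.1 hx).ge
    · exact hx.1.le
  have hb0 : 0 < b θ a := h0.trans_lt hq
  refine ⟨hb0, ?_, hI⟩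
  -- The supremum of an unbounded set is `0`, so `q_θ < b` alone does not give `ψ_θ(b) > 0`. In the
  -- unbounded case `ψ_θ ≤ 0` on all of `(0, ∞)`, and the integral could not be `a > 0`.
  by_contra! hle
  by_cases hbdd : BddAbove ({0} ∪ {r : ℝ | 0 < r ∧ psiShift α β ν θ r ≤ 0})
  · exact absurd (le_csSup hbdd (Or.inr ⟨hb0, hle⟩)) (not_le.2 hq)
  · have hneg : ∀ r, 0 < r → psiShift α β ν θ r ≤ 0 := fun r hr => by
      by_contra! hpos
      refine hbdd ⟨r, fun x hx => ?_⟩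
      rcases hx with hx | ⟨hx0, hx⟩
      · exact (mem_singleton_iff.1 hx).trans_le hr.le
      · by_contra! hlt
        exact absurd hx (not_le.2 (D.shift_pos hθ hr hpos hlt.le))
    have : ∫ r in Set.Ioi (b θ a), (psiShift α β ν θ r)⁻¹ ≤ 0 :=
      MeasureTheory.setIntegral_nonpos measurableSet_Ioi fun r hr =>
        inv_nonpos.2 (hneg r (hb0.trans hr))
    linarith

/-- Proposition 4.1 (first part): for fixed `h > 0`, the map `θ ↦ b^θ(h)` is
continuously differentiable on `(θ_∞, ∞)` and
`-∂_θ b^θ(h) = ψ_θ(b^θ(h)) ∫_{b^θ(h)}^∞ γ_θ(r)/ψ_θ(r)² dr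
            = ψ_θ(b^θ(h)) ∫_0^h γ_θ(b^θ(a))/ψ_θ(b^θ(a)) da
            = ∫_0^h γ_θ(b^θ(h-a)) e^{-ψ'(θ)a - ∫_0^a γ_θ(b^θ(h-x))dx} da`. -/
theorem bTheta_deriv_in_theta (α β : ℝ) (hβ : 0 ≤ β)
    (ν : MeasureTheory.Measure ℝ) (hν : IsLevyMeasure ν)
    (h1 : Assumption1 α β ν) (h2 : Assumption2 α β ν)
    (h : ℝ) (hh : 0 < h) (b : ℝ → ℝ → ℝ)
    (hb : ∀ θ : ℝ, thetaInf ν < (θ : EReal) → ∀ a, 0 < a →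
      qTheta α β ν θ < b θ a ∧
        ∫ r in Set.Ioi (b θ a), (psiShift α β ν θ r)⁻¹ = a) :
    ∀ θ : ℝ, thetaInf ν < (θ : EReal) →
      HasDerivAt (fun t => b t h)
        (-(psiShift α β ν θ (b θ h) *
            ∫ r in Set.Ioi (b θ h), gammaTheta α β ν θ r / (psiShift α β ν θ r) ^ 2)) θ ∧
      ContinuousOn (deriv (fun t => b t h)) {t : ℝ | thetaInf ν < (t : EReal)} ∧
      psiShift α β ν θ (b θ h) *
          ∫ r in Set.Ioi (b θ h), gammaTheta α β ν θ r / (psiShift α β ν θ r) ^ 2 =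
        psiShift α β ν θ (b θ h) *
          ∫ a in (0:ℝ)..h, gammaTheta α β ν θ (b θ a) / psiShift α β ν θ (b θ a) ∧
      psiShift α β ν θ (b θ h) *
          ∫ r in Set.Ioi (b θ h), gammaTheta α β ν θ r / (psiShift α β ν θ r) ^ 2 =
        ∫ a in (0:ℝ)..h, gammaTheta α β ν θ (b θ (h - a)) *
          Real.exp (-(deriv (psi α β ν) θ) * a -
            ∫ x in (0:ℝ)..a, gammaTheta α β ν θ (b θ (h - x))) := by
  intro θ hθ
  have D := isConvexC1_psi α hβ hν
  have hF := isInverseFlow_psi hβ hν hb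
  have hγ := hF.integral_gamma_eq D hθ hh
  refine ⟨?_, fun t ht => (hF.continuousAt_deriv D ht hh).continuousWithinAt, ?_, ?_⟩
  · obtain ⟨hb0, hpos, -⟩ := hF θ hθ h hh
    obtain ⟨hc, hm, c₁, hc₁, hc₁', hI⟩ := hF.exists_tail D hθ hh
    have hsq := (integrableOn_Ioi_shift
      (fun u => ((psi α β ν u - psi α β ν θ) ^ 2)⁻¹) (b θ h) θ).2
      (tail_integrable hc hm hc₁' hI hc₁.le le_rfl).2
    convert! hF.hasDerivAt D hθ hh using 1
    unfold psiShift gammaTheta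
    rw [D.integral_gamma hθ hb0 hpos hsq, integral_Ioi_shift
      (fun u => ((psi α β ν u - psi α β ν θ) ^ 2)⁻¹) (b θ h) θ, mul_sub,
      mul_inv_cancel₀ hpos.ne']
    ring
  · unfold psiShift gammaTheta
    rw [hγ]
  · unfold psiShift gammaTheta
    rw [hF.integral_gamma_exp D hθ hh, hγ]
end

section
/- Let ψ̃ be a sub-critical branching mechanism satisfying Assumptions 1 and 2, i.e. ψ̃'(0+) > 0, and for h > 0 let b(h) be the unique positive solution of ∫_{b(h)}^∞ dr/ψ̃(r) = h. Then b(h) → 0 as h → ∞, and lim_{h→∞} ψ̃'(0+) · ψ̃(b(h)) · ∫_{b(h)}^∞ dr/ψ̃(r)² = 1. -/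
/-!
The branching mechanism `ψ` is an integral of functions convex in `l`, hence convex on `[0, ∞)`
(`psi_convexOn`), and `ψ 0 = 0`. So `ψ r / r` is nondecreasing, with limit `δ` at `0+`; in particular
`ψ r ≥ δ r > 0`. With the Grey condition at infinity, `1 / ψ` is then integrable on every `(a, ∞)`,
`a > 0`, so `b h ≥ a` bounds `h` by a finite integral; hence `b h → 0`.

For the second limit, put `t = b h → 0+` and `s = √t`. The bound `ψ r ≥ δ r` on `(t, ∞)` gives
`δ ψ(t) ∫_t^∞ ψ⁻² ≤ ψ(t) / (δ t) → 1`. On `(t, s]` the monotonicity gives `ψ r ≤ (ψ s / s) r`, so that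
`δ ψ(t) ∫_t^∞ ψ⁻² ≥ δ (ψ t / t) (ψ s / s)⁻² (1 - √t) → 1`.
-/

open Set Filter

/-- The integrand of `psi` is of order `x²` near `0` and bounded at infinity. -/
lemma psi_integrand_bound {l x : ℝ} (hl : 0 ≤ l) (hx : 0 < x) :
    ‖Real.exp (-(l * x)) - 1 + (if x < 1 then l * x else 0)‖ ≤ (1 + l ^ 2) * min 1 (x ^ 2) := by
  have hlx : 0 ≤ l * x := by positivity
  have he0 := Real.exp_pos (-(l * x))
  have he1 : Real.exp (-(l * x)) ≤ 1 := Real.exp_le_one_iff.2 (by linarith)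
  rw [Real.norm_eq_abs]
  split_ifs with h
  · have hm : min 1 (x ^ 2) = x ^ 2 := min_eq_right (by nlinarith)
    rw [hm]
    have h0 : -(l * x) + 1 ≤ Real.exp (-(l * x)) := Real.add_one_le_exp _
    rw [abs_of_nonneg (by linarith)]
    have key : Real.exp (-(l * x)) - 1 + l * x ≤ (l * x) ^ 2 := by
      by_cases h1 : l * x ≤ 1
      · have := Real.abs_exp_sub_one_sub_id_le (x := -(l * x)) (by rw [abs_neg, abs_of_nonneg hlx]; exact h1)
        have := (abs_le.1 this).2
        nlinarith
      · push Not at h1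
        nlinarith
    nlinarith [sq_nonneg x]
  · have hm : min 1 (x ^ 2) = 1 := min_eq_left (by nlinarith)
    rw [hm, abs_le]
    constructor <;> nlinarith [sq_nonneg l]

lemma psi_integrand_integrable {ν : MeasureTheory.Measure ℝ} (hν : IsLevyMeasure ν) {l : ℝ}
    (hl : 0 ≤ l) :
    MeasureTheory.Integrable
      (fun x => Real.exp (-(l * x)) - 1 + (if x < 1 then l * x else 0)) ν := by
  have hpos : ∀ᵐ x ∂ν, 0 < x := by
    rw [MeasureTheory.ae_iff]
    convert hν.1 using 2
    ext x
    simp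
  have hmin : MeasureTheory.Integrable (fun x : ℝ => min 1 (x ^ 2)) ν := by
    refine ⟨(by fun_prop : Measurable fun x : ℝ => min 1 (x ^ 2)).aestronglyMeasurable, ?_⟩
    rw [MeasureTheory.hasFiniteIntegral_iff_ofReal (Eventually.of_forall fun x => by positivity)]
    exact hν.2.lt_top
  refine (hmin.const_mul (1 + l ^ 2)).mono' ?_ (hpos.mono fun x hx => psi_integrand_bound hl hx)
  refine Measurable.aestronglyMeasurable ?_
  refine Measurable.add (by fun_prop) ?_
  exact Measurable.ite measurableSet_Iio (by fun_prop) (by fun_prop)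

lemma psi_zero (α β : ℝ) (ν : MeasureTheory.Measure ℝ) : psi α β ν 0 = 0 := by
  simp [psi]

lemma psi_convexOn {α β : ℝ} (hβ : 0 ≤ β) {ν : MeasureTheory.Measure ℝ} (hν : IsLevyMeasure ν) :
    ConvexOn ℝ (Ici 0) (psi α β ν) := by
  refine ⟨convex_Ici 0, ?_⟩
  intro u hu v hv p q hp hq hpq
  have hw : 0 ≤ p * u + q * v := by
    have := mul_nonneg hp (mem_Ici.1 hu)
    have := mul_nonneg hq (mem_Ici.1 hv)
    linarith
  simp only [smul_eq_mul]
  unfold psi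
  have hint : ∫ x, (Real.exp (-((p * u + q * v) * x)) - 1
        + (if x < 1 then (p * u + q * v) * x else 0)) ∂ν
      ≤ p * (∫ x, (Real.exp (-(u * x)) - 1 + (if x < 1 then u * x else 0)) ∂ν)
        + q * ∫ x, (Real.exp (-(v * x)) - 1 + (if x < 1 then v * x else 0)) ∂ν := by
    have iu := (psi_integrand_integrable hν hu).const_mul p
    have iv := (psi_integrand_integrable hν hv).const_mul q
    rw [← MeasureTheory.integral_const_mul, ← MeasureTheory.integral_const_mul,
      ← MeasureTheory.integral_add iu iv]
    refine MeasureTheory.integral_mono (psi_integrand_integrable hν hw) (iu.add iv) fun x => ?_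
    have hc := convexOn_exp.2 (mem_univ (-(u * x))) (mem_univ (-(v * x))) hp hq hpq
    simp only [smul_eq_mul] at hc
    have e : p * -(u * x) + q * -(v * x) = -((p * u + q * v) * x) := by ring
    rw [e] at hc
    dsimp only
    split_ifs <;> linear_combination hc + hpq
  have hsq : (p * u + q * v) ^ 2 ≤ p * u ^ 2 + q * v ^ 2 := by
    have hq' : q = 1 - p := by linarith
    subst hq'
    nlinarith [mul_nonneg (mul_nonneg hp hq) (sq_nonneg (u - v))]
  have := mul_le_mul_of_nonneg_left hsq hβ
  linear_combination hint + this

/-- `ψ r / r` is nondecreasing: convexity of `ψ` along the chord from `0` to `s`. -/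
lemma psi_le_mul {α β : ℝ} (hβ : 0 ≤ β) {ν : MeasureTheory.Measure ℝ} (hν : IsLevyMeasure ν)
    {r s : ℝ} (hr : 0 < r) (hrs : r ≤ s) : psi α β ν r ≤ psi α β ν s / s * r := by
  have hs : 0 < s := hr.trans_le hrs
  have := (psi_convexOn (α := α) hβ hν).2 (mem_Ici.2 hs.le) (mem_Ici.2 le_rfl)
    (by positivity : 0 ≤ r / s) (by rw [sub_nonneg, div_le_one hs]; exact hrs : 0 ≤ 1 - r / s)
    (by ring)
  simp only [smul_eq_mul, mul_zero, add_zero, psi_zero] at this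
  rw [div_mul_cancel₀ _ hs.ne'] at this
  calc _ ≤ _ := this
    _ = _ := by ring

/-- A nondecreasing quotient `ψ s / s` is at least its limit `δ` at `0+`. -/
lemma mul_le_psi {α β : ℝ} (hβ : 0 ≤ β) {ν : MeasureTheory.Measure ℝ} (hν : IsLevyMeasure ν)
    {δ : ℝ} (hsub : Tendsto (fun l => psi α β ν l / l) (nhdsWithin 0 (Ioi 0)) (nhds δ))
    {s : ℝ} (hs : 0 < s) : δ * s ≤ psi α β ν s := by
  rw [← le_div_iff₀ hs]
  refine le_of_tendsto hsub ?_
  filter_upwards [Ioc_mem_nhdsGT hs] with r hr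
  rw [div_le_iff₀ hr.1]
  exact psi_le_mul hβ hν hr.1 hr.2

lemma psi_continuousOn {α β : ℝ} (hβ : 0 ≤ β) {ν : MeasureTheory.Measure ℝ}
    (hν : IsLevyMeasure ν) : ContinuousOn (psi α β ν) (Ioi 0) := by
  have := (psi_convexOn (α := α) hβ hν).continuousOn_interior
  rwa [interior_Ici] at this

lemma integral_Ioi_inv_sq {t : ℝ} (ht : 0 < t) :
    MeasureTheory.IntegrableOn (fun r : ℝ => (r ^ 2)⁻¹) (Ioi t) ∧
      ∫ r in Ioi t, (r ^ 2)⁻¹ = t⁻¹ := by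
  have e : (fun r : ℝ => r ^ (-2 : ℝ)) = fun r : ℝ => (r ^ 2)⁻¹ := by
    ext r
    rw [show (-2 : ℝ) = ((-2 : ℤ) : ℝ) by norm_num, Real.rpow_intCast]
    rfl
  have h1 := integrableOn_Ioi_rpow_of_lt (a := -2) (by norm_num) ht
  have h2 := integral_Ioi_rpow_of_lt (a := -2) (by norm_num) ht
  rw [e] at h1 h2
  refine ⟨h1, h2.trans ?_⟩
  norm_num [Real.rpow_neg_one]

lemma integral_Ioc_inv_sq {t s : ℝ} (ht : 0 < t) (hts : t ≤ s) :
    ∫ r in Ioc t s, (r ^ 2)⁻¹ = t⁻¹ - s⁻¹ := by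
  obtain ⟨i1, e1⟩ := integral_Ioi_inv_sq ht
  obtain ⟨i2, e2⟩ := integral_Ioi_inv_sq (ht.trans_le hts)
  have := MeasureTheory.setIntegral_union (μ := MeasureTheory.volume) (f := fun r : ℝ => (r ^ 2)⁻¹)
    (Ioc_disjoint_Ioi (a := t) (le_refl s)) measurableSet_Ioi (i1.mono_set Ioc_subset_Ioi_self) i2
  rw [Ioc_union_Ioi_eq_Ioi hts, e1, e2] at this
  linarith

/-- Continuity of `ψ` controls `1 / ψ` on compact parts of `(0, ∞)`, the Grey condition its tail. -/
lemma psi_inv_integrableOn {α β : ℝ} (hβ : 0 ≤ β) {ν : MeasureTheory.Measure ℝ}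
    (hν : IsLevyMeasure ν) (h2 : Assumption2 α β ν) (hpos : ∀ r, 0 < r → 0 < psi α β ν r)
    {t : ℝ} (ht : 0 < t) :
    MeasureTheory.IntegrableOn (fun r => (psi α β ν r)⁻¹) (Ioi t) := by
  obtain ⟨M, -, hM⟩ := h2
  have hc : ContinuousOn (fun r => (psi α β ν r)⁻¹) (Ioi 0) :=
    (psi_continuousOn hβ hν).inv₀ fun r hr => (hpos r hr).ne'
  have htm : t ≤ max M t := le_max_right _ _
  rw [← Ioc_union_Ioi_eq_Ioi htm]
  refine MeasureTheory.IntegrableOn.union ?_ ?_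
  · refine MeasureTheory.IntegrableOn.mono_set ?_ (Ioc_subset_Icc_self)
    exact (hc.mono fun r hr => ht.trans_le hr.1).integrableOn_Icc
  · have hsub : Ioi (max M t) ⊆ Ioi 0 := Ioi_subset_Ioi (ht.le.trans htm)
    refine ⟨(hc.mono hsub).aestronglyMeasurable measurableSet_Ioi, ?_⟩
    rw [MeasureTheory.hasFiniteIntegral_iff_ofReal]
    · refine lt_of_le_of_lt ?_ hM.lt_top
      simp only [one_div]
      exact MeasureTheory.lintegral_mono_set (Ioi_subset_Ioi (le_max_left _ _))
    · refine MeasureTheory.ae_restrict_of_forall_mem measurableSet_Ioi fun r hr => ?_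
      exact inv_nonneg.2 (hpos r (hsub hr)).le

/-- The two-sided estimate behind the limit, from `δ r ≤ ψ r` on `(t, ∞)` and
`ψ r ≤ (ψ s / s) r` on `(t, s]`. -/
lemma integral_psi_inv_sq_bounds {α β : ℝ} (hβ : 0 ≤ β) {ν : MeasureTheory.Measure ℝ}
    (hν : IsLevyMeasure ν) {δ : ℝ} (hδ : 0 < δ)
    (hsub : Tendsto (fun l => psi α β ν l / l) (nhdsWithin 0 (Ioi 0)) (nhds δ))
    {t s : ℝ} (ht : 0 < t) (hts : t ≤ s) :
    ((psi α β ν s / s) ^ 2)⁻¹ * (t⁻¹ - s⁻¹) ≤ ∫ r in Ioi t, ((psi α β ν r) ^ 2)⁻¹ ∧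
      ∫ r in Ioi t, ((psi α β ν r) ^ 2)⁻¹ ≤ (δ ^ 2)⁻¹ * t⁻¹ := by
  have hlow : ∀ r, 0 < r → δ * r ≤ psi α β ν r := fun r hr => mul_le_psi hβ hν hsub hr
  have hpos : ∀ r, 0 < r → 0 < psi α β ν r := fun r hr => (mul_pos hδ hr).trans_le (hlow r hr)
  obtain ⟨i1, e1⟩ := integral_Ioi_inv_sq ht
  have hc : ContinuousOn (fun r => ((psi α β ν r) ^ 2)⁻¹) (Ioi 0) :=
    ((psi_continuousOn hβ hν).pow 2).inv₀ fun r hr => (pow_pos (hpos r hr) 2).ne'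
  have hle : ∀ r ∈ Ioi t, ((psi α β ν r) ^ 2)⁻¹ ≤ (δ ^ 2)⁻¹ * (r ^ 2)⁻¹ := by
    intro r hr
    have hr0 : 0 < r := ht.trans hr
    rw [← mul_inv, ← mul_pow]
    exact inv_anti₀ (by positivity) (pow_le_pow_left₀ (by positivity) (hlow r hr0) 2)
  have i2 : MeasureTheory.IntegrableOn (fun r => ((psi α β ν r) ^ 2)⁻¹) (Ioi t) := by
    refine MeasureTheory.Integrable.mono' (i1.const_mul (δ ^ 2)⁻¹)
      ((hc.mono (Ioi_subset_Ioi ht.le)).aestronglyMeasurable measurableSet_Ioi)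
      (MeasureTheory.ae_restrict_of_forall_mem measurableSet_Ioi fun r hr => ?_)
    rw [Real.norm_of_nonneg (by positivity)]
    exact hle r hr
  constructor
  · rw [← integral_Ioc_inv_sq ht hts, ← MeasureTheory.integral_const_mul]
    refine le_trans ?_ (MeasureTheory.setIntegral_mono_set i2
      (Eventually.of_forall fun r => by positivity)
      (Ioc_subset_Ioi_self : Ioc t s ⊆ Ioi t).eventuallyLE)
    refine MeasureTheory.setIntegral_mono_on
      (MeasureTheory.Integrable.const_mul (i1.mono_set Ioc_subset_Ioi_self) _)
      (i2.mono_set Ioc_subset_Ioi_self) measurableSet_Ioc fun r hr => ?_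
    have hr0 : 0 < r := ht.trans hr.1
    rw [← mul_inv, ← mul_pow]
    exact inv_anti₀ (pow_pos (hpos r hr0) 2)
      (pow_le_pow_left₀ (hpos r hr0).le (psi_le_mul hβ hν hr0 hr.2) 2)
  · rw [← e1, ← MeasureTheory.integral_const_mul]
    exact MeasureTheory.setIntegral_mono_on i2 (i1.const_mul _) measurableSet_Ioi hle

lemma tendsto_mul_integral_psi_inv_sq {α β : ℝ} (hβ : 0 ≤ β) {ν : MeasureTheory.Measure ℝ}
    (hν : IsLevyMeasure ν) {δ : ℝ} (hδ : 0 < δ)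
    (hsub : Tendsto (fun l => psi α β ν l / l) (nhdsWithin 0 (Ioi 0)) (nhds δ)) :
    Tendsto (fun t => δ * psi α β ν t * ∫ r in Ioi t, ((psi α β ν r) ^ 2)⁻¹)
      (nhdsWithin 0 (Ioi 0)) (nhds 1) := by
  have hlow : ∀ r, 0 < r → δ * r ≤ psi α β ν r := fun r hr => mul_le_psi hβ hν hsub hr
  have hpos : ∀ r, 0 < r → 0 < psi α β ν r := fun r hr => (mul_pos hδ hr).trans_le (hlow r hr)
  have hsq0 : Tendsto Real.sqrt (nhdsWithin 0 (Ioi 0)) (nhds 0) := by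
    have := (Real.continuous_sqrt.tendsto 0).mono_left (nhdsWithin_le_nhds (s := Ioi 0))
    rwa [Real.sqrt_zero] at this
  have hsq : Tendsto Real.sqrt (nhdsWithin 0 (Ioi 0)) (nhdsWithin 0 (Ioi 0)) :=
    tendsto_nhdsWithin_iff.2 ⟨hsq0, by
      filter_upwards [self_mem_nhdsWithin] with t ht using Real.sqrt_pos.2 ht⟩
  have hL : Tendsto (fun t => δ * (psi α β ν t / t) *
      (((psi α β ν √t / √t) ^ 2)⁻¹ * (1 - √t))) (nhdsWithin 0 (Ioi 0)) (nhds 1) := by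
    have := (hsub.const_mul δ).mul ((((hsub.comp hsq).pow 2).inv₀ (pow_ne_zero 2 hδ.ne')).mul
      (hsq0.const_sub 1))
    have e : δ * δ * ((δ ^ 2)⁻¹ * (1 - 0)) = 1 := by
      field_simp
      ring
    rw [e] at this
    exact this
  have hU : Tendsto (fun t => δ⁻¹ * (psi α β ν t / t)) (nhdsWithin 0 (Ioi 0)) (nhds 1) := by
    have := hsub.const_mul δ⁻¹
    rwa [inv_mul_cancel₀ hδ.ne'] at this
  refine tendsto_of_tendsto_of_tendsto_of_le_of_le' hL hU ?_ ?_
  · filter_upwards [Ioc_mem_nhdsGT one_pos] with t ht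
    have hs : 0 < √t := Real.sqrt_pos.2 ht.1
    have hts : t ≤ √t := Real.le_sqrt_of_sq_le (by nlinarith [ht.1, ht.2])
    refine le_trans (le_of_eq ?_) (mul_le_mul_of_nonneg_left
      (integral_psi_inv_sq_bounds hβ hν hδ hsub ht.1 hts).1 (mul_pos hδ (hpos t ht.1)).le)
    -- `t (t⁻¹ - (√t)⁻¹) = 1 - √t`
    have e : t⁻¹ - (√t)⁻¹ = (1 - √t) / t := by
      have h2 : √t * √t = t := Real.mul_self_sqrt ht.1.le
      have ht0 := ht.1.ne'
      field_simp
      linear_combination (1 : ℝ) * h2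
    rw [e]
    ring
  · filter_upwards [self_mem_nhdsWithin] with t ht
    have ht0 : 0 < t := ht
    refine le_trans (mul_le_mul_of_nonneg_left
      (integral_psi_inv_sq_bounds hβ hν hδ hsub ht0 le_rfl).2 (mul_pos hδ (hpos t ht0)).le)
      (le_of_eq ?_)
    field_simp

/-- For a sub-critical branching mechanism `ψ̃` (with `ψ̃'(0+) = δ > 0`) satisfying
Assumptions 1 and 2, with `b(h)` the unique positive solution of
`∫_{b(h)}^∞ dr/ψ̃(r) = h`: `b(h) → 0` as `h → ∞` and
`ψ̃'(0+) ψ̃(b(h)) ∫_{b(h)}^∞ dr/ψ̃(r)² → 1` as `h → ∞`. -/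
theorem subcritical_limit_one (α β : ℝ) (hβ : 0 ≤ β)
    (ν : MeasureTheory.Measure ℝ) (hν : IsLevyMeasure ν)
    (h1 : Assumption1 α β ν) (h2 : Assumption2 α β ν)
    (δ : ℝ) (hδ : 0 < δ)
    (hsub : Filter.Tendsto (fun l => psi α β ν l / l) (nhdsWithin 0 (Set.Ioi 0))
      (nhds δ))
    (b : ℝ → ℝ)
    (hb : ∀ h, 0 < h → 0 < b h ∧ ∫ r in Set.Ioi (b h), (psi α β ν r)⁻¹ = h) :
    Filter.Tendsto b Filter.atTop (nhds 0) ∧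
    Filter.Tendsto
      (fun h => δ * psi α β ν (b h) * ∫ r in Set.Ioi (b h), ((psi α β ν r) ^ 2)⁻¹)
      Filter.atTop (nhds 1) := by
  have hlow : ∀ r, 0 < r → δ * r ≤ psi α β ν r := fun r hr => mul_le_psi hβ hν hsub hr
  have hpos : ∀ r, 0 < r → 0 < psi α β ν r := fun r hr => (mul_pos hδ hr).trans_le (hlow r hr)
  have hb0 : Tendsto b atTop (nhds 0) := by
    rw [tendsto_order]
    refine ⟨fun a ha => ?_, fun a ha => ?_⟩
    · filter_upwards [eventually_gt_atTop 0] with h hh using ha.trans (hb h hh).1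
    · filter_upwards [eventually_gt_atTop 0,
        eventually_gt_atTop (∫ r in Ioi a, (psi α β ν r)⁻¹)] with h hh hh'
      -- if `a ≤ b h`, then `h = ∫_{b h}^∞ 1/ψ ≤ ∫_a^∞ 1/ψ`
      by_contra hab
      push Not at hab
      refine absurd hh' (not_lt.2 ?_)
      rw [← (hb h hh).2]
      exact MeasureTheory.setIntegral_mono_set (psi_inv_integrableOn hβ hν h2 hpos ha)
        (MeasureTheory.ae_restrict_of_forall_mem measurableSet_Ioi fun r hr =>
          inv_nonneg.2 (hpos r (ha.trans hr)).le)
        (Ioi_subset_Ioi hab).eventuallyLE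
  refine ⟨hb0, (tendsto_mul_integral_psi_inv_sq hβ hν hδ hsub).comp ?_⟩
  exact tendsto_nhdsWithin_iff.2 ⟨hb0, by
    filter_upwards [eventually_gt_atTop 0] with h hh using (hb h hh).1⟩
end
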